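/- arXiv:2405.01894 — 2 statements merged into one kernel-verified Lean document; each statement's English description precedes it below -/
import Mathlib

section
/- Assume conditions (Cond1) and (CondAttr2). Then any bounded complete trajectory of ℛ⁺ distinct from 0 and ξ_M is of the type γ(t) = 0 for t ≤ τ and γ(t) = u(t) for t ≥ τ, where τ ∈ ℝ and u is the unique solution on [τ,∞) of the linear problem ∂u/∂t − ∂²u/∂x² = b(t) + ω(t)u on (τ,∞)×(0,1) with Dirichlet boundary conditions and u(τ,·) = 0. Moreover every such γ satisfies γ(t) → 0 as t → −∞ and ‖γ(t) − ξ_M(t)‖ → 0 as t → +∞. -/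
open MeasureTheory Set

noncomputable section

/-- Lebesgue measure restricted to the spatial interval `(0,1)`. -/
def μ01 : Measure ℝ := volume.restrict (Ioo (0:ℝ) 1)

/-- `H = L²(0,1)`. -/
abbrev Hsp : Type := Lp ℝ 2 μ01

/-- The Heaviside multifunction. -/
def heaviside (s : ℝ) : Set ℝ :=
  if s < 0 then {-1} else if s = 0 then Icc (-1) 1 else {1}

/-- Condition (Cond1). -/
structure Cond1 (b ω : ℝ → ℝ) (b0 b1 ω0 ω1 : ℝ) : Prop where
  contb : Continuous b
  contω : Continuous ω
  b0pos : 0 < b0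
  blb : ∀ t, b0 ≤ b t
  bub : ∀ t, b t ≤ b1
  ω0nonneg : 0 ≤ ω0
  ωlb : ∀ t, ω0 ≤ ω t
  ωub : ∀ t, ω t ≤ ω1

/-- `v ∈ H²(0,1) ∩ H¹₀(0,1)` with (weak) second derivative `w ∈ L²(0,1)`:
`v` has a representative that is continuous on `[0,1]`, vanishes at the boundary,
is differentiable on `(0,1)` and whose derivative is an antiderivative of `w`. -/
def InDomainA (v w : Hsp) : Prop :=
  ∃ vt : ℝ → ℝ, ContinuousOn vt (Icc 0 1) ∧ vt 0 = 0 ∧ vt 1 = 0 ∧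
    (∀ᵐ x ∂μ01, vt x = v x) ∧
    ∃ g : ℝ → ℝ,
      (∀ x ∈ Ioo (0:ℝ) 1, HasDerivAt vt (g x) x) ∧
      ∀ x ∈ Ioo (0:ℝ) 1, ∀ y ∈ Ioo (0:ℝ) 1, g x - g y = ∫ z in y..x, w z

/-- A strong solution of the inclusion on `[τ,∞)`, with explicit data:
`r` is the `L²`-selection, `u'` the time derivative, `uxx` the second spatial derivative. -/
structure IsStrongSolutionWith (b ω : ℝ → ℝ) (τ : ℝ) (u r u' uxx : ℝ → Hsp) : Prop where
  cont : ContinuousOn u (Ici τ)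
  rmem : ∀ T, τ < T → MemLp r 2 (volume.restrict (Ioo τ T))
  sel : ∀ᵐ t ∂(volume.restrict (Ioi τ)), ∀ᵐ x ∂μ01,
      ∃ h ∈ heaviside (u t x), r t x = b t * h + ω t * u t x
  dom : ∀ᵐ t ∂(volume.restrict (Ioi τ)), InDomainA (u t) (uxx t)
  eq : ∀ᵐ t ∂(volume.restrict (Ioi τ)), u' t = r t + uxx t
  fund : ∀ T1 T2 : ℝ, τ < T1 → T1 < T2 →
      IntervalIntegrable u' volume T1 T2 ∧
      ∀ t ∈ Icc T1 T2, u t = u T1 + ∫ s in T1..t, u' s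

/-- A strong solution of the inclusion on `[τ,∞)`. -/
def IsStrongSolution (b ω : ℝ → ℝ) (τ : ℝ) (u : ℝ → Hsp) : Prop :=
  ∃ r u' uxx, IsStrongSolutionWith b ω τ u r u' uxx

/-- The solution is non-negative on `[τ,∞)`. -/
def NonnegOn (u : ℝ → Hsp) (τ : ℝ) : Prop :=
  ∀ t, τ ≤ t → ∀ᵐ x ∂μ01, 0 ≤ u t x

/-- `v` is positive: it has a continuous representative on `[0,1]`
which is strictly positive on `(0,1)`. -/
def IsPositive (v : Hsp) : Prop :=
  ∃ vt : ℝ → ℝ, ContinuousOn vt (Icc 0 1) ∧ (∀ᵐ x ∂μ01, vt x = v x) ∧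
    ∀ x ∈ Ioo (0:ℝ) 1, 0 < vt x


/-- A strong solution of the linear problem
`∂u/∂t − ∂²u/∂x² = b(t) + ω(t)u` on `(τ,∞)×(0,1)` with Dirichlet boundary
conditions, with explicit time derivative `u'` and second spatial derivative `uxx`. -/
structure IsLinearSolutionWith (b ω : ℝ → ℝ) (τ : ℝ) (u u' uxx : ℝ → Hsp) : Prop where
  cont : ContinuousOn u (Ici τ)
  dom : ∀ᵐ t ∂(volume.restrict (Ioi τ)), InDomainA (u t) (uxx t)
  eq : ∀ᵐ t ∂(volume.restrict (Ioi τ)), ∀ᵐ x ∂μ01,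
      u' t x = b t + ω t * u t x + uxx t x
  fund : ∀ T1 T2 : ℝ, τ < T1 → T1 < T2 →
      IntervalIntegrable u' volume T1 T2 ∧
      ∀ t ∈ Icc T1 T2, u t = u T1 + ∫ s in T1..t, u' s

/-- A strong solution of the linear problem on `[τ,∞)`. -/
def IsLinearSolution (b ω : ℝ → ℝ) (τ : ℝ) (u : ℝ → Hsp) : Prop :=
  ∃ u' uxx, IsLinearSolutionWith b ω τ u u' uxx

/-- A complete trajectory of the inclusion. -/
def IsCompleteTrajectory (b ω : ℝ → ℝ) (φ : ℝ → Hsp) : Prop :=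
  ∀ τ : ℝ, IsStrongSolution b ω τ φ

/-- A bounded function into `H`. -/
def BddTraj (φ : ℝ → Hsp) : Prop := ∃ M : ℝ, ∀ t : ℝ, ‖φ t‖ ≤ M

/-!
Where a strong solution `u ≥ 0` vanishes, so do `u'` and `uxx` almost everywhere, hence the
selection of `H₀(u)` is non-negative and `u` is a supersolution of the heat equation. By the weak
maximum principle `u` stays above any subsolution that starts below it. A small bump travelling at
constant velocity and decaying exponentially is such a subsolution, and it can be steered to any
point of `(0,1)` in an arbitrarily short time: a non-negative solution that is nonzero at some time
is positive at all later times. So the zero set of `γ` in time is a closed down-set, and on its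
complement `H₀(γ)` is single-valued, that is, `γ` solves the linear problem.

By Wirtinger's inequality `π² ∫ v² ≤ ∫ (v')²` on `H¹₀(0,1)` and Grönwall's inequality, two solutions
of the linear problem approach each other in `L²` at rate at least `π² - ω₁ > 0`. If `γ` never
vanished, then letting the initial time of this contraction tend to `-∞` would give `γ = ξ`. Hence
the zero set of `γ` is a half-line `(-∞, τ]`, and after `τ` the same contraction gives both
uniqueness and convergence to `ξ`.
-/

open Filter Topology

section AbsoluteContinuity

theorem absolutelyContinuousOnInterval_of_dist_le {X Y : Type*} [PseudoMetricSpace X]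
    [PseudoMetricSpace Y] {f : ℝ → X} {g : ℝ → Y} {a b : ℝ}
    (hg : AbsolutelyContinuousOnInterval g a b)
    (h : ∀ x ∈ uIcc a b, ∀ y ∈ uIcc a b, dist (f x) (f y) ≤ dist (g x) (g y)) :
    AbsolutelyContinuousOnInterval f a b := by
  refine squeeze_zero' (Eventually.of_forall fun _ => Finset.sum_nonneg fun _ _ => dist_nonneg)
    ?_ hg
  rw [eventually_inf_principal]
  filter_upwards with I hI
  exact Finset.sum_le_sum fun i hi => h _ (hI.1 i hi).1 _ (hI.1 i hi).2

theorem le_of_ae_deriv_nonpos {f : ℝ → ℝ} {a b : ℝ} (hab : a ≤ b)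
    (hf : AbsolutelyContinuousOnInterval f a b)
    (hd : ∀ᵐ x, x ∈ Ioo a b → deriv f x ≤ 0) : f b ≤ f a := by
  have hint : 0 ≤ ∫ x in a..b, -deriv f x := by
    refine intervalIntegral.integral_nonneg_of_ae_restrict hab ?_
    rw [← restrict_Ioo_eq_restrict_Icc, EventuallyLE, ae_restrict_iff' measurableSet_Ioo]
    filter_upwards [hd] with x hx hxab
    simpa using hx hxab
  rw [intervalIntegral.integral_neg, hf.integral_deriv_eq_sub] at hint
  linarith

theorem le_exp_mul_of_ae_deriv_le_mul {f : ℝ → ℝ} {a b K : ℝ} (hab : a ≤ b)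
    (hf : AbsolutelyContinuousOnInterval f a b)
    (hd : ∀ᵐ x, x ∈ Ioo a b → deriv f x ≤ K * f x) :
    f b ≤ Real.exp (K * (b - a)) * f a := by
  have hexp : ∀ x, HasDerivAt (fun x => Real.exp (-(K * (x - a))))
      (Real.exp (-(K * (x - a))) * -(K * 1)) x := fun x =>
    (((hasDerivAt_id x).sub_const a).const_mul K).neg.exp
  have hac : AbsolutelyContinuousOnInterval (fun x => Real.exp (-(K * (x - a))) * f x) a b :=
    (ContDiff.contDiffOn (by fun_prop)).absolutelyContinuousOnInterval.mul hf
  have hle := le_of_ae_deriv_nonpos hab hac <| by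
    filter_upwards [hf.ae_differentiableAt, hd] with x hdiff hx hxab
    have hfx := (hdiff (uIcc_of_le hab ▸ Ioo_subset_Icc_self hxab)).hasDerivAt
    rw [((hexp x).fun_mul hfx).deriv]
    nlinarith [hx hxab, Real.exp_pos (-(K * (x - a)))]
  rw [sub_self, mul_zero, neg_zero, Real.exp_zero, one_mul, Real.exp_neg] at hle
  exact (inv_mul_le_iff₀ (Real.exp_pos _)).1 hle

end AbsoluteContinuity

section Primitive

variable {E : Type*} [NormedAddCommGroup E] [NormedSpace ℝ E] {u u' v v' : ℝ → E} {a b : ℝ}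

/-- `u` is a primitive of the integrable function `u'` on `[a, b]`. This is the regularity
in time of strong solutions, and the regularity in space of elements of `H²(0,1)`. -/
def IsPrimitiveOn (u u' : ℝ → E) (a b : ℝ) : Prop :=
  IntervalIntegrable u' volume a b ∧ ∀ t ∈ Icc a b, u t = u a + ∫ s in a..t, u' s

namespace IsPrimitiveOn

theorem sub_eq_integral (h : IsPrimitiveOn u u' a b) {x y : ℝ} (hx : x ∈ Icc a b)
    (hy : y ∈ Icc a b) : u y - u x = ∫ s in x..y, u' s := by
  have hint : ∀ z ∈ Icc a b, IntervalIntegrable u' volume a z := fun z hz =>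
    h.1.mono_set (uIcc_subset_uIcc_left (Icc_subset_uIcc hz))
  rw [h.2 x hx, h.2 y hy, add_sub_add_left_eq_sub,
    intervalIntegral.integral_interval_sub_left (hint y hy) (hint x hx)]

theorem congr_ae (h : IsPrimitiveOn u u' a b) (hab : a ≤ b)
    (heq : ∀ᵐ t, t ∈ Ioo a b → u' t = v' t) : IsPrimitiveOn u v' a b := by
  have hae : ∀ t ∈ Icc a b, ∀ᵐ s, s ∈ uIoc a t → u' s = v' s := fun t ht => by
    filter_upwards [heq, Measure.ae_ne volume b] with s hs hsb hst
    rw [uIoc_of_le ht.1] at hst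
    exact hs ⟨hst.1, (hst.2.trans ht.2).lt_of_ne hsb⟩
  exact ⟨h.1.congr_ae <| (ae_restrict_iff' measurableSet_uIoc).2 <| hae b (right_mem_Icc.2 hab),
    fun t ht => (h.2 t ht).trans <|
      congrArg (u a + ·) (intervalIntegral.integral_congr_ae (hae t ht))⟩

theorem sub (hu : IsPrimitiveOn u u' a b) (hv : IsPrimitiveOn v v' a b) :
    IsPrimitiveOn (u - v) (u' - v') a b := by
  refine ⟨hu.1.sub hv.1, fun t ht => ?_⟩
  have hsub : uIcc a t ⊆ uIcc a b := uIcc_subset_uIcc_left (Icc_subset_uIcc ht)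
  simp only [Pi.sub_apply]
  rw [hu.2 t ht, hv.2 t ht,
    intervalIntegral.integral_sub (hu.1.mono_set hsub) (hv.1.mono_set hsub)]
  abel

theorem absolutelyContinuousOnInterval (h : IsPrimitiveOn u u' a b) (hab : a ≤ b) :
    AbsolutelyContinuousOnInterval u a b := by
  have hprim : IsPrimitiveOn (fun t => ∫ s in a..t, ‖u' s‖) (fun t => ‖u' t‖) a b :=
    ⟨h.1.norm, fun t _ => by simp only [intervalIntegral.integral_same, zero_add]⟩
  refine absolutelyContinuousOnInterval_of_dist_le
    (h.1.norm.absolutelyContinuousOnInterval_intervalIntegral left_mem_uIcc) fun x hx y hy => ?_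
  rw [uIcc_of_le hab] at hx hy
  rw [dist_comm, dist_comm (∫ s in a..x, _), dist_eq_norm, dist_eq_norm,
    h.sub_eq_integral hx hy, hprim.sub_eq_integral hx hy]
  exact intervalIntegral.norm_integral_le_abs_integral_norm

theorem continuousOn (h : IsPrimitiveOn u u' a b) (hab : a ≤ b) : ContinuousOn u (Icc a b) :=
  uIcc_of_le hab ▸ (h.absolutelyContinuousOnInterval hab).continuousOn

theorem of_hasDerivAt [CompleteSpace E] (hab : a ≤ b) (hu : ContinuousOn u (Icc a b))
    (hu' : ContinuousOn u' (Icc a b)) (hd : ∀ t ∈ Ioo a b, HasDerivAt u (u' t) t) :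
    IsPrimitiveOn u u' a b := by
  refine ⟨hu'.intervalIntegrable_of_Icc hab, fun t ht => ?_⟩
  have hsub : Icc a t ⊆ Icc a b := Icc_subset_Icc_right ht.2
  rw [intervalIntegral.integral_eq_sub_of_hasDerivAt_of_le ht.1 (hu.mono hsub)
    (fun s hs => hd s (Ioo_subset_Ioo_right ht.2 hs))
    ((hu'.mono hsub).intervalIntegrable_of_Icc ht.1)]
  abel

variable [CompleteSpace E]

theorem clm_comp {F : Type*} [NormedAddCommGroup F] [NormedSpace ℝ F] [CompleteSpace F]
    (h : IsPrimitiveOn u u' a b) (L : E →L[ℝ] F) :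
    IsPrimitiveOn (fun t => L (u t)) (fun t => L (u' t)) a b := by
  refine ⟨⟨L.integrable_comp h.1.1, L.integrable_comp h.1.2⟩, fun t ht => ?_⟩
  beta_reduce
  rw [h.2 t ht, map_add, L.intervalIntegral_comp_comm
    (h.1.mono_set (uIcc_subset_uIcc_left (Icc_subset_uIcc ht)))]

theorem ae_hasDerivAt (h : IsPrimitiveOn u u' a b) :
    ∀ᵐ t, t ∈ Ioo a b → HasDerivAt u (u' t) t := by
  filter_upwards [h.1.ae_hasDerivAt_integral] with t ht htab
  refine ((ht (Icc_subset_uIcc (Ioo_subset_Icc_self htab)) a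
    left_mem_uIcc).const_add (u a)).congr_of_eventuallyEq ?_
  filter_upwards [Ioo_mem_nhds htab.1 htab.2] with s hs using h.2 s (Ioo_subset_Icc_self hs)

theorem hasDerivAt (h : IsPrimitiveOn u u' a b) (hu' : ContinuousOn u' (Icc a b)) {t : ℝ}
    (ht : t ∈ Ioo a b) : HasDerivAt u (u' t) t := by
  have hnhds := Icc_mem_nhds ht.1 ht.2
  have hsub : uIcc a t ⊆ uIcc a b :=
    uIcc_subset_uIcc_left (Icc_subset_uIcc (Ioo_subset_Icc_self ht))
  refine ((intervalIntegral.integral_hasDerivAt_right (h.1.mono_set hsub)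
    (hu'.stronglyMeasurableAtFilter_nhdsWithin measurableSet_Icc t |>.filter_mono ?_)
    (hu'.continuousAt hnhds)).const_add (u a)).congr_of_eventuallyEq ?_
  · rw [nhdsWithin_eq_nhds.2 hnhds]
  · filter_upwards [hnhds] with s hs using h.2 s hs

theorem ae_hasDerivAt_of_forall_Ioi {τ : ℝ}
    (h : ∀ a b, τ < a → a < b → IsPrimitiveOn u u' a b) :
    ∀ᵐ t, τ < t → HasDerivAt u (u' t) t := by
  have hrat : ∀ᵐ t, ∀ p q : ℚ, τ < p → (p : ℝ) < q → t ∈ Ioo (p : ℝ) q →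
      HasDerivAt u (u' t) t := by
    refine ae_all_iff.2 fun p => ae_all_iff.2 fun q => ?_
    simp only [eventually_imp_distrib_left]
    exact fun hp hpq => (h p q hp hpq).ae_hasDerivAt
  filter_upwards [hrat] with t ht hτ
  obtain ⟨p, hτp, hpt⟩ := exists_rat_btwn hτ
  obtain ⟨q, htq⟩ := exists_rat_gt t
  exact ht p q hτp (hpt.trans htq) ⟨hpt, htq⟩

end IsPrimitiveOn

end Primitive

section Wirtinger

variable {f g : ℝ → ℝ} {a b : ℝ}

theorem sq_mul_integral_sq_le_of_lt_pi_div (hab : a < b) (hf : ContinuousOn f (Icc a b))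
    (hg : ContinuousOn g (Icc a b)) (hfg : ∀ x ∈ Ioo a b, HasDerivAt f (g x) x)
    (ha : f a = 0) (hb : f b = 0) {l : ℝ} (hl₀ : 0 ≤ l) (hl : l < Real.pi / (b - a)) :
    l ^ 2 * ∫ x in a..b, f x ^ 2 ≤ ∫ x in a..b, g x ^ 2 := by
  have hangle : ∀ x ∈ Icc a b, l * (x - (a + b) / 2) ∈ Ioo (-(Real.pi / 2)) (Real.pi / 2) := by
    rw [lt_div_iff₀ (sub_pos.2 hab)] at hl
    intro x hx
    constructor <;> nlinarith [hx.1, hx.2]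
  have hcos : ∀ x ∈ Icc a b, Real.cos (l * (x - (a + b) / 2)) ≠ 0 := fun x hx =>
    (Real.cos_pos_of_mem_Ioo (hangle x hx)).ne'
  set T : ℝ → ℝ := fun x => Real.tan (l * (x - (a + b) / 2))
  have hT : ∀ x ∈ Icc a b, HasDerivAt T (l * (1 + T x ^ 2)) x := fun x hx => by
    have h := (Real.hasDerivAt_tan (hcos x hx)).comp x
      (((hasDerivAt_id x).sub_const ((a + b) / 2)).const_mul l)
    convert! h using 1
    rw [← Real.inv_one_add_tan_sq (hcos x hx), one_div, inv_inv, mul_one, mul_comm]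
  have hTc : ContinuousOn T (Icc a b) := fun x hx => (hT x hx).continuousAt.continuousWithinAt
  -- The square is `≥ 0`, and its cross term completes to the derivative of `l * T * f ^ 2`.
  have hsq : ∫ x in a..b, (g x ^ 2 - l ^ 2 * f x ^ 2 - (g x + l * T x * f x) ^ 2) = 0 := by
    have hprim : ∀ x ∈ Ioo a b, HasDerivAt (fun x => -(l * T x * f x ^ 2))
        (g x ^ 2 - l ^ 2 * f x ^ 2 - (g x + l * T x * f x) ^ 2) x := fun x hx => by
      convert! (((hT x (Ioo_subset_Icc_self hx)).const_mul l).fun_mul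
        ((hfg x hx).fun_pow 2)).fun_neg using 1
      ring
    rw [intervalIntegral.integral_eq_sub_of_hasDerivAt_of_le hab.le (by fun_prop) hprim
      (ContinuousOn.intervalIntegrable_of_Icc hab.le (by fun_prop)), ha, hb]
    ring
  have hle : ∫ x in a..b, (g x ^ 2 - l ^ 2 * f x ^ 2 - (g x + l * T x * f x) ^ 2) ≤
      ∫ x in a..b, (g x ^ 2 - l ^ 2 * f x ^ 2) := by
    refine intervalIntegral.integral_mono_on hab.le
      (ContinuousOn.intervalIntegrable_of_Icc hab.le (by fun_prop))
      (ContinuousOn.intervalIntegrable_of_Icc hab.le (by fun_prop)) fun x _ => ?_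
    exact sub_le_self _ (sq_nonneg _)
  rw [hsq, intervalIntegral.integral_sub
    (ContinuousOn.intervalIntegrable_of_Icc hab.le (by fun_prop))
    (ContinuousOn.intervalIntegrable_of_Icc hab.le (by fun_prop)),
    intervalIntegral.integral_const_mul] at hle
  linarith

theorem sq_pi_div_mul_integral_sq_le (hab : a < b) (hf : ContinuousOn f (Icc a b))
    (hg : ContinuousOn g (Icc a b)) (hfg : ∀ x ∈ Ioo a b, HasDerivAt f (g x) x)
    (ha : f a = 0) (hb : f b = 0) :
    (Real.pi / (b - a)) ^ 2 * ∫ x in a..b, f x ^ 2 ≤ ∫ x in a..b, g x ^ 2 := by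
  have hpos : 0 < Real.pi / (b - a) := div_pos Real.pi_pos (sub_pos.2 hab)
  have hlim : Tendsto (fun l : ℝ => l ^ 2 * ∫ x in a..b, f x ^ 2) (𝓝[<] (Real.pi / (b - a)))
      (𝓝 ((Real.pi / (b - a)) ^ 2 * ∫ x in a..b, f x ^ 2)) :=
    Continuous.tendsto (by fun_prop) _ |>.mono_left nhdsWithin_le_nhds
  refine le_of_tendsto hlim ?_
  filter_upwards [Ioo_mem_nhdsLT hpos] with l hl
  exact sq_mul_integral_sq_le_of_lt_pi_div hab hf hg hfg ha hb hl.1.le hl.2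

end Wirtinger

section L2Order

variable {α : Type*} [MeasurableSpace α] {μ : Measure α}

theorem ae_posPart_apply {p : ENNReal} (v : Lp ℝ p μ) : ∀ᵐ x ∂μ, v⁺ x = max (v x) 0 := by
  filter_upwards [Lp.coeFn_sup v 0, Lp.coeFn_zero ℝ p μ] with x hsup hzero
  rw [posPart_def, hsup, Pi.sup_apply, hzero, Pi.zero_apply]

theorem ae_negPart_apply {p : ENNReal} (v : Lp ℝ p μ) : ∀ᵐ x ∂μ, v⁻ x = max (-v x) 0 := by
  filter_upwards [ae_posPart_apply (-v), Lp.coeFn_neg v] with x hpos hneg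
  rw [← posPart_neg, hpos, hneg, Pi.neg_apply]

theorem L2_inner_eq_integral_mul (v w : Lp ℝ 2 μ) : inner ℝ v w = ∫ x, v x * w x ∂μ := by
  simp only [L2.inner_def, RCLike.inner_apply, conj_trivial, mul_comm]

theorem L2_inner_nonneg {v w : Lp ℝ 2 μ} (hv : 0 ≤ v) (hw : 0 ≤ w) : 0 ≤ inner ℝ v w := by
  rw [L2_inner_eq_integral_mul]
  refine integral_nonneg_of_ae ?_
  filter_upwards [(Lp.coeFn_nonneg v).2 hv, (Lp.coeFn_nonneg w).2 hw] with x using mul_nonneg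

theorem L2_inner_posPart_negPart (v : Lp ℝ 2 μ) : inner ℝ v⁺ v⁻ = 0 := by
  rw [L2_inner_eq_integral_mul]
  refine integral_eq_zero_of_ae ?_
  filter_upwards [ae_posPart_apply v, ae_negPart_apply v] with x hpos hneg
  rw [hpos, hneg, Pi.zero_apply, mul_eq_zero]
  exact (le_total (v x) 0).imp max_eq_right fun h => max_eq_right (neg_nonpos.2 h)

theorem abs_norm_posPart_sq_sub_le (v w : Lp ℝ 2 μ) :
    |‖w⁺‖ ^ 2 - ‖v⁺‖ ^ 2 - 2 * inner ℝ v⁺ (w - v)| ≤ ‖w - v‖ ^ 2 := by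
  have hsub : w - v = (w⁺ - v⁺) - (w⁻ - v⁻) := by
    conv_lhs => rw [← posPart_sub_negPart w, ← posPart_sub_negPart v]
    abel
  have hvw : 0 ≤ inner ℝ v⁺ w⁻ := L2_inner_nonneg (posPart_nonneg v) (negPart_nonneg w)
  have hwv : 0 ≤ inner ℝ w⁺ v⁻ := L2_inner_nonneg (posPart_nonneg w) (negPart_nonneg v)
  have hpos : ‖w⁺‖ ^ 2 - ‖v⁺‖ ^ 2 - 2 * inner ℝ v⁺ (w - v) =
      ‖w⁺ - v⁺‖ ^ 2 + 2 * inner ℝ v⁺ w⁻ := by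
    rw [hsub, norm_sub_sq_real, real_inner_comm v⁺ w⁺]
    simp only [inner_sub_right, L2_inner_posPart_negPart, real_inner_self_eq_norm_sq]
    ring
  have hneg : ‖w - v‖ ^ 2 =
      ‖w⁺ - v⁺‖ ^ 2 + ‖w⁻ - v⁻‖ ^ 2 + 2 * inner ℝ w⁺ v⁻ + 2 * inner ℝ v⁺ w⁻ := by
    rw [hsub, norm_sub_sq_real]
    simp only [inner_sub_left, inner_sub_right, L2_inner_posPart_negPart]
    ring
  rw [hpos, hneg, abs_of_nonneg (by positivity)]
  linarith [sq_nonneg ‖w⁻ - v⁻‖]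

theorem hasDerivAt_norm_posPart_sq {u : ℝ → Lp ℝ 2 μ} {D : Lp ℝ 2 μ} {t : ℝ}
    (hu : HasDerivAt u D t) :
    HasDerivAt (fun s => ‖(u s)⁺‖ ^ 2) (2 * inner ℝ (u t)⁺ D) t := by
  have hremainder : HasFDerivAt
      (fun w => ‖w⁺‖ ^ 2 - ‖(u t)⁺‖ ^ 2 - 2 * inner ℝ (u t)⁺ (w - u t))
      (0 : Lp ℝ 2 μ →L[ℝ] ℝ) (u t) :=
    (Asymptotics.IsBigO.of_bound' <| Eventually.of_forall fun w => by
      simpa using abs_norm_posPart_sq_sub_le (u t) w).hasFDerivAt one_lt_two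
  have hlin : HasDerivAt (fun s => 2 * inner ℝ (u t)⁺ (u s - u t)) (2 * inner ℝ (u t)⁺ D) t := by
    simpa using ((hasDerivAt_const t (u t)⁺).inner ℝ (hu.sub_const (u t))).const_mul 2
  simpa using ((hremainder.comp_hasDerivAt t hu).add hlin).add_const (‖(u t)⁺‖ ^ 2)

theorem absolutelyContinuousOnInterval_norm_posPart_sq {u : ℝ → Lp ℝ 2 μ} {a b : ℝ}
    (hu : AbsolutelyContinuousOnInterval u a b) :
    AbsolutelyContinuousOnInterval (fun s => ‖(u s)⁺‖ ^ 2) a b := by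
  have hnorm : AbsolutelyContinuousOnInterval (fun s => ‖(u s)⁺‖) a b :=
    absolutelyContinuousOnInterval_of_dist_le hu fun x _ y _ =>
      (dist_norm_norm_le _ _).trans (dist_eq_norm (u x)⁺ (u y)⁺ ▸
        (lipschitzWith_posPart.dist_le_mul (u x) (u y)).trans_eq (one_mul _))
  simpa only [sq] using hnorm.fun_mul hnorm

/-- A non-negative curve in `L²` touches its lower barrier `0` where it vanishes, so its derivative
tested against the indicator of any subset of the zero set is that of a function at a minimum. -/
theorem ae_eq_zero_of_hasDerivAt_of_nonneg [IsFiniteMeasure μ] {u : ℝ → Lp ℝ 2 μ} {D : Lp ℝ 2 μ}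
    {t : ℝ} (hu : HasDerivAt u D t) (hnonneg : ∀ᶠ s in 𝓝 t, 0 ≤ u s) :
    ∀ᵐ x ∂μ, u t x = 0 → D x = 0 := by
  set Z := {x | u t x = 0}
  have hZ : MeasurableSet Z := (Lp.stronglyMeasurable (u t)).measurable (measurableSet_singleton 0)
  refine (ae_restrict_iff' hZ).1 <| Integrable.ae_eq_zero_of_forall_setIntegral_eq_zero
    ((Lp.memLp D).integrable one_le_two).integrableOn fun A hA _ => ?_
  rw [Measure.restrict_restrict hA]
  have hAZ : MeasurableSet (A ∩ Z) := hA.inter hZ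
  set χ : Lp ℝ 2 μ := indicatorConstLp 2 hAZ (measure_ne_top μ _) 1
  have hχ : ∀ v, inner ℝ χ v = ∫ x in A ∩ Z, v x ∂μ :=
    L2.inner_indicatorConstLp_one hAZ (measure_ne_top μ _)
  have hmin : IsLocalMin (fun s => inner ℝ χ (u s)) t := by
    have hzero : inner ℝ χ (u t) = 0 := by
      rw [hχ]
      exact setIntegral_eq_zero_of_forall_eq_zero fun x hx => hx.2
    filter_upwards [hnonneg] with s hs
    rw [hzero, hχ]
    exact setIntegral_nonneg_of_ae ((Lp.coeFn_nonneg _).2 hs)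
  have hderiv : HasDerivAt (fun s => inner ℝ χ (u s)) (inner ℝ χ D) t := by
    simpa using (hasDerivAt_const t χ).inner ℝ hu
  rw [← hχ, hmin.hasDerivAt_eq_zero hderiv]

end L2Order

section Interval

instance : IsFiniteMeasure μ01 := inferInstanceAs (IsFiniteMeasure (volume.restrict (Ioo 0 1)))

theorem ae_μ01_iff {p : ℝ → Prop} : (∀ᵐ x ∂μ01, p x) ↔ ∀ᵐ x, x ∈ Ioo (0 : ℝ) 1 → p x :=
  ae_restrict_iff' measurableSet_Ioo

theorem integral_μ01 (f : ℝ → ℝ) : ∫ x, f x ∂μ01 = ∫ x in (0 : ℝ)..1, f x := by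
  rw [intervalIntegral.integral_of_le zero_le_one, integral_Ioc_eq_integral_Ioo, μ01]

theorem Hsp_intervalIntegrable (w : Hsp) : IntervalIntegrable w volume 0 1 :=
  (intervalIntegrable_iff_integrableOn_Ioo_of_le zero_le_one).2
    ((Lp.memLp w).integrable one_le_two)

end Interval

section LocalExtrema

theorem mul_deriv_max_zero_nonneg {f : ℝ → ℝ} {f' x : ℝ} (hf : HasDerivAt f f' x) :
    0 ≤ f' * deriv (fun y => max (f y) 0) x := by
  rcases lt_trichotomy (f x) 0 with hneg | hzero | hpos
  · have hloc : (fun y => max (f y) 0) =ᶠ[𝓝 x] fun _ => 0 := by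
      filter_upwards [hf.continuousAt.eventually_lt_const hneg] with y hy using max_eq_right hy.le
    rw [hloc.deriv_eq, deriv_const, mul_zero]
  · have hmin : IsLocalMin (fun y => max (f y) 0) x :=
      Eventually.of_forall fun y => by simp only [hzero, max_self, le_max_right]
    rw [hmin.deriv_eq_zero, mul_zero]
  · have hloc : (fun y => max (f y) 0) =ᶠ[𝓝 x] f := by
      filter_upwards [hf.continuousAt.eventually_const_lt hpos] with y hy using max_eq_left hy.le
    rw [hloc.deriv_eq, hf.deriv]
    exact mul_self_nonneg f'

theorem ae_deriv_eq_zero_of_eqOn_const {E : Type*} [NormedAddCommGroup E] [NormedSpace ℝ E]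
    {f f' : ℝ → E} {s : Set ℝ} {c : E} (hf : ∀ x ∈ s, f x = c) :
    ∀ᵐ x, x ∈ s → HasDerivAt f (f' x) x → f' x = 0 := by
  filter_upwards [(countable_setOfPred_isolated_right_within (s := s)).ae_notMem volume]
    with x hx hxs hd
  have hright : (𝓝[s ∩ Ioi x] x).NeBot := ⟨fun hbot => hx ⟨hxs, hbot⟩⟩
  have hacc : AccPt x (𝓟 s) := hright.mono <| le_inf
    (nhdsWithin_mono x fun y hy => ne_of_gt hy.2)
    (le_principal_iff.2 (mem_of_superset self_mem_nhdsWithin inter_subset_left))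
  exact (uniqueDiffWithinAt_iff_accPt.2 hacc).eq_deriv s hd.hasDerivWithinAt
    ((hasDerivWithinAt_const x s c).congr hf (hf x hxs))

end LocalExtrema

/-- `f` and `g` are the continuous representatives of `v ∈ H²(0,1) ∩ H¹₀(0,1)` and of its first
derivative, `w` being the second derivative of `v`. -/
structure IsH2Representative (v w : Hsp) (f g : ℝ → ℝ) : Prop where
  primitive : IsPrimitiveOn f g 0 1
  primitive_deriv : IsPrimitiveOn g w 0 1
  zero : f 0 = 0
  one : f 1 = 0
  ae_eq : ∀ᵐ x ∂μ01, f x = v x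

theorem InDomainA.exists_isH2Representative {v w : Hsp} (h : InDomainA v w) :
    ∃ f g, IsH2Representative v w f g := by
  obtain ⟨f, hf, h0, h1, hae, g, hfg, hgw⟩ := h
  have hint := Hsp_intervalIntegrable w
  have hmid : (1 / 2 : ℝ) ∈ Ioo (0 : ℝ) 1 := by norm_num
  have hmid' : (1 / 2 : ℝ) ∈ uIcc (0 : ℝ) 1 := Icc_subset_uIcc (Ioo_subset_Icc_self hmid)
  -- `g` is only controlled inside `(0,1)`; this is its continuous extension to `[0,1]`.
  set G : ℝ → ℝ := fun x => g (1 / 2) + ∫ z in (1 / 2)..x, w z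
  have hG : IsPrimitiveOn G w 0 1 := by
    refine ⟨hint, fun x hx => ?_⟩
    rw [add_assoc, intervalIntegral.integral_add_adjacent_intervals
      (hint.mono_set (uIcc_subset_uIcc hmid' left_mem_uIcc))
      (hint.mono_set (uIcc_subset_uIcc left_mem_uIcc (Icc_subset_uIcc hx)))]
  refine ⟨f, G, .of_hasDerivAt zero_le_one hf (hG.continuousOn zero_le_one) fun x hx => ?_,
    hG, h0, h1, hae⟩
  have hGg : G x = g x := by simp only [G, ← hgw x hx _ hmid, add_sub_cancel]
  exact hGg ▸ hfg x hx

namespace IsH2Representative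

variable {v w v₁ w₁ : Hsp} {f g f₁ g₁ : ℝ → ℝ}

theorem sub (h : IsH2Representative v w f g) (h₁ : IsH2Representative v₁ w₁ f₁ g₁) :
    IsH2Representative (v - v₁) (w - w₁) (f - f₁) (g - g₁) where
  primitive := h.primitive.sub h₁.primitive
  primitive_deriv := (h.primitive_deriv.sub h₁.primitive_deriv).congr_ae zero_le_one <| by
    filter_upwards [ae_μ01_iff.1 (Lp.coeFn_sub w w₁)] with x hx hx01 using (hx hx01).symm
  zero := by rw [Pi.sub_apply, h.zero, h₁.zero, sub_zero]
  one := by rw [Pi.sub_apply, h.one, h₁.one, sub_zero]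
  ae_eq := by
    filter_upwards [h.ae_eq, h₁.ae_eq, Lp.coeFn_sub v v₁] with x hx hx₁ hsub
    rw [hsub, Pi.sub_apply, Pi.sub_apply, hx, hx₁]

theorem continuousOn (h : IsH2Representative v w f g) : ContinuousOn f (Icc 0 1) :=
  h.primitive.continuousOn zero_le_one

theorem continuousOn_deriv (h : IsH2Representative v w f g) : ContinuousOn g (Icc 0 1) :=
  h.primitive_deriv.continuousOn zero_le_one

theorem hasDerivAt (h : IsH2Representative v w f g) {x : ℝ} (hx : x ∈ Ioo (0 : ℝ) 1) :
    HasDerivAt f (g x) x :=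
  h.primitive.hasDerivAt h.continuousOn_deriv hx

theorem inner_eq_neg_integral (h : IsH2Representative v w f g) {z : Hsp} {φ : ℝ → ℝ}
    (hφ : AbsolutelyContinuousOnInterval φ 0 1) (h0 : φ 0 = 0) (h1 : φ 1 = 0)
    (hz : ∀ᵐ x ∂μ01, z x = φ x) :
    inner ℝ w z = -∫ x in (0 : ℝ)..1, g x * deriv φ x := by
  have hparts := hφ.integral_mul_deriv_eq_deriv_mul
    (h.primitive_deriv.absolutelyContinuousOnInterval zero_le_one)
  rw [h0, h1, zero_mul, zero_mul, sub_zero, zero_sub, ← integral_μ01] at hparts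
  rw [L2_inner_eq_integral_mul]
  convert hparts using 1
  · refine integral_congr_ae ?_
    filter_upwards [hz, ae_μ01_iff.2 h.primitive_deriv.ae_hasDerivAt] with x hx hd
    rw [hx, hd.deriv, mul_comm]
  · simp only [mul_comm]

theorem inner_self_le (h : IsH2Representative v w f g) :
    inner ℝ w v ≤ -(Real.pi ^ 2 * ‖v‖ ^ 2) := by
  have hae : ∀ᵐ x ∂μ01, v x = f x := h.ae_eq.mono fun x hx => hx.symm
  have hnorm : ‖v‖ ^ 2 = ∫ x in (0 : ℝ)..1, f x ^ 2 := by
    rw [← integral_μ01, ← real_inner_self_eq_norm_sq, L2_inner_eq_integral_mul]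
    refine integral_congr_ae ?_
    filter_upwards [hae] with x hx
    rw [hx, sq]
  have hderiv : ∫ x in (0 : ℝ)..1, g x * deriv f x = ∫ x in (0 : ℝ)..1, g x ^ 2 := by
    rw [← integral_μ01, ← integral_μ01]
    refine integral_congr_ae (ae_μ01_iff.2 <| Eventually.of_forall fun x hx => ?_)
    simp only [(h.hasDerivAt hx).deriv, sq]
  rw [h.inner_eq_neg_integral (h.primitive.absolutelyContinuousOnInterval zero_le_one)
    h.zero h.one hae, hderiv, hnorm, neg_le_neg_iff]
  simpa using sq_pi_div_mul_integral_sq_le zero_lt_one h.continuousOn h.continuousOn_deriv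
    (fun x hx => h.hasDerivAt hx) h.zero h.one

theorem inner_posPart_nonpos (h : IsH2Representative v w f g) : inner ℝ w v⁺ ≤ 0 := by
  have hac : AbsolutelyContinuousOnInterval (fun x => max (f x) 0) 0 1 :=
    absolutelyContinuousOnInterval_of_dist_le
      (h.primitive.absolutelyContinuousOnInterval zero_le_one)
      fun x _ y _ => abs_max_sub_max_le_abs (f x) (f y) 0
  have hae : ∀ᵐ x ∂μ01, v⁺ x = max (f x) 0 := by
    filter_upwards [ae_posPart_apply v, h.ae_eq] with x hpos hx
    rw [hpos, hx]
  rw [h.inner_eq_neg_integral hac (by simp only [h.zero, max_self])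
    (by simp only [h.one, max_self]) hae, neg_nonpos, ← integral_μ01]
  exact integral_nonneg_of_ae <| ae_μ01_iff.2 <| Eventually.of_forall fun x hx =>
    mul_deriv_max_zero_nonneg (h.hasDerivAt hx)

theorem nonneg (h : IsH2Representative v w f g) (hv : 0 ≤ v) {x : ℝ} (hx : x ∈ Icc (0 : ℝ) 1) :
    0 ≤ f x := by
  have heq : EqOn f (fun y => |f y|) (Icc 0 1) := by
    refine Measure.eqOn_Icc_of_ae_eq volume zero_ne_one ?_ h.continuousOn h.continuousOn.abs
    rw [← restrict_Ioo_eq_restrict_Icc]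
    filter_upwards [h.ae_eq, (Lp.coeFn_nonneg v).2 hv] with y hy hnonneg
    rw [abs_of_nonneg (hy ▸ hnonneg)]
  rw [heq hx]
  exact abs_nonneg (f x)

end IsH2Representative

theorem InDomainA.ae_eq_zero_of_nonneg {v w : Hsp} (h : InDomainA v w) (hv : 0 ≤ v) :
    ∀ᵐ x ∂μ01, v x = 0 → w x = 0 := by
  obtain ⟨f, g, hrep⟩ := h.exists_isH2Representative
  have hg : ∀ x ∈ {x ∈ Ioo (0 : ℝ) 1 | f x = 0}, g x = 0 := fun x hx => by
    have hmin : IsLocalMin f x := by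
      filter_upwards [Icc_mem_nhds hx.1.1 hx.1.2] with y hy
      exact hx.2 ▸ hrep.nonneg hv hy
    exact hmin.hasDerivAt_eq_zero (hrep.hasDerivAt hx.1)
  rw [ae_μ01_iff]
  filter_upwards [ae_deriv_eq_zero_of_eqOn_const (f' := w) hg, hrep.primitive_deriv.ae_hasDerivAt,
    ae_μ01_iff.1 hrep.ae_eq] with x hconst hd hae hx hvx
  exact hconst ⟨hx, (hae hx).trans hvx⟩ (hd hx)

section LinearProblem

variable {b ω : ℝ → ℝ} {ω1 τ : ℝ} {U W u' w' uxx wxx : ℝ → Hsp}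

theorem IsLinearSolutionWith.ae_sub_eq (hU : IsLinearSolutionWith b ω τ U u' uxx)
    (hW : IsLinearSolutionWith b ω τ W w' wxx) :
    ∀ᵐ t, τ < t → u' t - w' t = ω t • (U t - W t) + (uxx t - wxx t) := by
  filter_upwards [(ae_restrict_iff' measurableSet_Ioi).1 hU.eq,
    (ae_restrict_iff' measurableSet_Ioi).1 hW.eq] with t hUt hWt hτ
  refine Lp.ext ?_
  filter_upwards [hUt hτ, hWt hτ, Lp.coeFn_sub (u' t) (w' t), Lp.coeFn_sub (U t) (W t),
    Lp.coeFn_sub (uxx t) (wxx t), Lp.coeFn_smul (ω t) (U t - W t),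
    Lp.coeFn_add (ω t • (U t - W t)) (uxx t - wxx t)] with x hu hw hsub' hsub hsubxx hsmul hadd
  simp only [hsub', hadd, Pi.sub_apply, Pi.add_apply, hsmul, Pi.smul_apply, hsub, hsubxx, hu, hw,
    smul_eq_mul]
  ring

theorem IsLinearSolutionWith.ae_deriv_norm_sub_sq_le (hω : ∀ t, ω t ≤ ω1)
    (hU : IsLinearSolutionWith b ω τ U u' uxx) (hW : IsLinearSolutionWith b ω τ W w' wxx) :
    ∀ᵐ t, τ < t → deriv (fun s => ‖U s - W s‖ ^ 2) t ≤
      -(2 * (Real.pi ^ 2 - ω1)) * ‖U t - W t‖ ^ 2 := by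
  filter_upwards [IsPrimitiveOn.ae_hasDerivAt_of_forall_Ioi hU.fund,
    IsPrimitiveOn.ae_hasDerivAt_of_forall_Ioi hW.fund,
    (ae_restrict_iff' measurableSet_Ioi).1 hU.dom,
    (ae_restrict_iff' measurableSet_Ioi).1 hW.dom, hU.ae_sub_eq hW]
    with t hUd hWd hUdom hWdom heq hτ
  obtain ⟨_, _, hUrep⟩ := (hUdom hτ).exists_isH2Representative
  obtain ⟨_, _, hWrep⟩ := (hWdom hτ).exists_isH2Representative
  have hdiss := (hUrep.sub hWrep).inner_self_le
  rw [((hUd hτ).fun_sub (hWd hτ)).norm_sq.deriv, heq hτ, inner_add_right, real_inner_smul_right,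
    real_inner_self_eq_norm_sq, real_inner_comm]
  nlinarith [mul_le_mul_of_nonneg_right (hω t) (sq_nonneg ‖U t - W t‖)]

theorem IsLinearSolutionWith.norm_sub_sq_le (hω : ∀ t, ω t ≤ ω1)
    (hU : IsLinearSolutionWith b ω τ U u' uxx) (hW : IsLinearSolutionWith b ω τ W w' wxx)
    {s t : ℝ} (hs : τ < s) (hst : s < t) :
    ‖U t - W t‖ ^ 2 ≤ Real.exp (-(2 * (Real.pi ^ 2 - ω1)) * (t - s)) * ‖U s - W s‖ ^ 2 := by
  have hnorm : AbsolutelyContinuousOnInterval (fun s => ‖U s - W s‖) s t :=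
    absolutelyContinuousOnInterval_of_dist_le
      ((IsPrimitiveOn.sub (hU.fund s t hs hst) (hW.fund s t hs hst)).absolutelyContinuousOnInterval
        hst.le) fun _ _ _ _ =>
          (dist_norm_norm_le _ _).trans_eq (dist_eq_norm _ _).symm
  have hsq : AbsolutelyContinuousOnInterval (fun s => ‖U s - W s‖ ^ 2) s t := by
    simpa only [sq] using hnorm.fun_mul hnorm
  refine le_exp_mul_of_ae_deriv_le_mul hst.le hsq ?_
  filter_upwards [hU.ae_deriv_norm_sub_sq_le hω hW] with x hx hxst using hx (hs.trans hxst.1)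

namespace IsLinearSolution

theorem norm_sub_le_exp_mul (hω : ∀ t, ω t ≤ ω1) (hU : IsLinearSolution b ω τ U)
    (hW : IsLinearSolution b ω τ W) {t : ℝ} (ht : τ ≤ t) :
    ‖U t - W t‖ ≤ Real.exp (-(Real.pi ^ 2 - ω1) * (t - τ)) * ‖U τ - W τ‖ := by
  obtain ⟨u', uxx, hU⟩ := hU
  obtain ⟨w', wxx, hW⟩ := hW
  rcases ht.eq_or_lt with rfl | hlt
  · simp only [sub_self, mul_zero, Real.exp_zero, one_mul, le_refl]
  have hcont : ContinuousWithinAt (fun s => ‖U s - W s‖) (Ioi τ) τ :=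
    ((hU.cont τ self_mem_Ici).sub (hW.cont τ self_mem_Ici)).norm.mono Ioi_subset_Ici_self
  have hlim : ContinuousWithinAt
      (fun s => Real.exp (-(Real.pi ^ 2 - ω1) * (t - s)) * ‖U s - W s‖) (Ioi τ) τ :=
    (Continuous.continuousWithinAt (by fun_prop)).mul hcont
  refine ge_of_tendsto hlim.tendsto ?_
  filter_upwards [Ioo_mem_nhdsGT hlt] with s hs
  refine le_of_sq_le_sq ((hU.norm_sub_sq_le hω hW hs.1 hs.2).trans_eq ?_) (by positivity)
  rw [mul_pow, ← Real.exp_nat_mul, Nat.cast_two, ← mul_assoc, mul_neg]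

theorem eq_of_eq_initial (hω : ∀ t, ω t ≤ ω1) (hU : IsLinearSolution b ω τ U)
    (hW : IsLinearSolution b ω τ W) (h : U τ = W τ) {t : ℝ} (ht : τ ≤ t) : U t = W t := by
  have hle := hU.norm_sub_le_exp_mul hω hW ht
  rwa [h, sub_self, norm_zero, mul_zero, norm_le_zero_iff, sub_eq_zero] at hle

theorem tendsto_norm_sub (hω : ∀ t, ω t ≤ ω1) (hω1 : ω1 < Real.pi ^ 2)
    (hU : IsLinearSolution b ω τ U) (hW : IsLinearSolution b ω τ W) :
    Tendsto (fun t => ‖U t - W t‖) atTop (𝓝 0) := by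
  have hlin : Tendsto (fun t => -(Real.pi ^ 2 - ω1) * (t - τ)) atTop atBot :=
    (tendsto_atTop_add_const_right _ (-τ) tendsto_id).const_mul_atTop_of_neg
      (neg_lt_zero.2 (sub_pos.2 hω1))
  have hlim : Tendsto (fun t => Real.exp (-(Real.pi ^ 2 - ω1) * (t - τ)) * ‖U τ - W τ‖) atTop
      (𝓝 0) := by
    simpa using (Real.tendsto_exp_atBot.comp hlin).mul_const ‖U τ - W τ‖
  refine squeeze_zero' (Eventually.of_forall fun _ => norm_nonneg _) ?_ hlim
  filter_upwards [Ici_mem_atTop τ] with t ht using hU.norm_sub_le_exp_mul hω hW ht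

theorem eq_of_bddTraj (hω : ∀ t, ω t ≤ ω1) (hω1 : ω1 < Real.pi ^ 2)
    (hU : ∀ τ, IsLinearSolution b ω τ U) (hW : ∀ τ, IsLinearSolution b ω τ W)
    (hUb : BddTraj U) (hWb : BddTraj W) (t : ℝ) : U t = W t := by
  obtain ⟨M, hM⟩ := hUb
  obtain ⟨N, hN⟩ := hWb
  have hlin : Tendsto (fun s => -(Real.pi ^ 2 - ω1) * (t - s)) atBot atBot :=
    (tendsto_atTop_add_const_left _ t tendsto_neg_atBot_atTop).const_mul_atTop_of_neg
      (neg_lt_zero.2 (sub_pos.2 hω1))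
  have hlim : Tendsto (fun s => Real.exp (-(Real.pi ^ 2 - ω1) * (t - s)) * (M + N)) atBot
      (𝓝 0) := by
    simpa using (Real.tendsto_exp_atBot.comp hlin).mul_const (M + N)
  rw [← sub_eq_zero, ← norm_le_zero_iff]
  refine ge_of_tendsto hlim ?_
  filter_upwards [Iic_mem_atBot t] with s hs
  refine ((hU s).norm_sub_le_exp_mul hω (hW s) hs).trans ?_
  gcongr
  exact (norm_sub_le _ _).trans (add_le_add (hM s) (hN s))

end IsLinearSolution

end LinearProblem

section StrongSolution

variable {b ω : ℝ → ℝ} {τ : ℝ} {u r u' uxx : ℝ → Hsp}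

theorem NonnegOn.nonneg (h : NonnegOn u τ) {t : ℝ} (ht : τ ≤ t) : 0 ≤ u t :=
  (Lp.coeFn_nonneg _).1 (h t ht)

theorem IsStrongSolutionWith.ae_selection_eq (h : IsStrongSolutionWith b ω τ u r u' uxx) :
    ∀ᵐ t, τ < t → ∀ᵐ x ∂μ01, 0 < u t x → r t x = b t + ω t * u t x := by
  filter_upwards [(ae_restrict_iff' measurableSet_Ioi).1 h.sel] with t hsel hτ
  filter_upwards [hsel hτ] with x ⟨y, hy, hr⟩ hpos
  rw [heaviside, if_neg hpos.not_gt, if_neg hpos.ne', mem_singleton_iff] at hy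
  rw [hr, hy, mul_one]

/-- Where `u` vanishes, both `u'` and `uxx` vanish, hence so does the selection. -/
theorem IsStrongSolutionWith.ae_selection_nonneg (h : IsStrongSolutionWith b ω τ u r u' uxx)
    (hb : ∀ t, 0 ≤ b t) (hω : ∀ t, 0 ≤ ω t) (hu : NonnegOn u τ) :
    ∀ᵐ t, τ < t → 0 ≤ r t := by
  filter_upwards [h.ae_selection_eq, (ae_restrict_iff' measurableSet_Ioi).1 h.dom,
    (ae_restrict_iff' measurableSet_Ioi).1 h.eq, IsPrimitiveOn.ae_hasDerivAt_of_forall_Ioi h.fund]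
    with t hsel hdom heq hderiv hτ
  have hnonneg : ∀ᶠ s in 𝓝 t, 0 ≤ u s := by
    filter_upwards [Ioi_mem_nhds hτ] with s hs using hu.nonneg (le_of_lt hs)
  refine (Lp.coeFn_nonneg _).1 ?_
  filter_upwards [hsel hτ, hu t (le_of_lt hτ),
    (hdom hτ).ae_eq_zero_of_nonneg (hu.nonneg (le_of_lt hτ)),
    ae_eq_zero_of_hasDerivAt_of_nonneg (hderiv hτ) hnonneg, Lp.coeFn_add (r t) (uxx t)]
    with x hr hux hxx htime hadd
  rcases hux.eq_or_lt with hzero | hpos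
  · rw [heq hτ, hadd, Pi.add_apply, hxx hzero.symm, add_zero] at htime
    exact (htime hzero.symm).ge
  · rw [hr hpos]
    exact add_nonneg (hb t) (mul_nonneg (hω t) hux)

theorem IsStrongSolution.isLinearSolution (h : IsStrongSolution b ω τ u)
    (hpos : ∀ t, τ < t → ∀ᵐ x ∂μ01, 0 < u t x) : IsLinearSolution b ω τ u := by
  obtain ⟨r, u', uxx, h⟩ := h
  refine ⟨u', uxx, h.cont, h.dom, (ae_restrict_iff' measurableSet_Ioi).2 ?_, h.fund⟩
  filter_upwards [h.ae_selection_eq, (ae_restrict_iff' measurableSet_Ioi).1 h.eq]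
    with t hsel heq hτ
  filter_upwards [hsel hτ, hpos t hτ, Lp.coeFn_add (r t) (uxx t)] with x hr hux hadd
  rw [heq hτ, hadd, Pi.add_apply, hr hux]

end StrongSolution

section MaximumPrinciple

variable {d d' : ℝ → Hsp} {s T : ℝ}

theorem nonpos_of_ae_deriv_le_laplacian (hsT : s ≤ T) (hd : IsPrimitiveOn d d' s T)
    (hheat : ∀ᵐ t, t ∈ Ioo s T → ∃ w f g, IsH2Representative (d t) w f g ∧ d' t ≤ w)
    (hs : d s ≤ 0) : d T ≤ 0 := by
  rw [← posPart_eq_zero] at hs ⊢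
  have hle := le_of_ae_deriv_nonpos hsT
    (absolutelyContinuousOnInterval_norm_posPart_sq (hd.absolutelyContinuousOnInterval hsT)) <| by
      filter_upwards [hd.ae_hasDerivAt, hheat] with t hderiv hrep ht
      obtain ⟨w, f, g, hrep, hle⟩ := hrep ht
      rw [(hasDerivAt_norm_posPart_sq (hderiv ht)).deriv]
      have hdiss := hrep.inner_posPart_nonpos
      have hgap := L2_inner_nonneg (posPart_nonneg (d t)) (sub_nonneg.2 hle)
      rw [inner_sub_right, real_inner_comm] at hgap
      linarith
  rw [hs, norm_zero, zero_pow two_ne_zero] at hle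
  exact norm_eq_zero.1 (pow_eq_zero_iff two_ne_zero |>.1 (hle.antisymm (sq_nonneg _)))

end MaximumPrinciple

section Slice

/-- The inclusion of `C([0,1])` into `L²(0,1)`. -/
def continuousToHsp : C(unitInterval, ℝ) →L[ℝ] Hsp :=
  BoundedContinuousFunction.toLp 2 μ01 ℝ ∘L
    BoundedContinuousFunction.compContinuousCLM ℝ ℝ
      ⟨projIcc 0 1 zero_le_one, continuous_projIcc⟩ ∘L
    (ContinuousMap.linearIsometryBoundedOfCompact unitInterval ℝ ℝ).toContinuousLinearEquiv

theorem ae_continuousToHsp_apply (f : C(unitInterval, ℝ)) :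
    ∀ᵐ x ∂μ01, continuousToHsp f x = f (projIcc 0 1 zero_le_one x) :=
  BoundedContinuousFunction.coeFn_toLp 2 μ01 ℝ _

/-- A continuous function `P (t, x)` as a curve in `C([0,1])`, parametrised by the time `t`. -/
def curryUnitInterval (P : C(ℝ × ℝ, ℝ)) : C(ℝ, C(unitInterval, ℝ)) :=
  (P.comp (.prodMap (.id ℝ) ⟨Subtype.val, continuous_subtype_val⟩)).curry

/-- A continuous function `P (t, x)` as a curve in `L²(0,1)`, parametrised by the time `t`. -/
def slice (P : C(ℝ × ℝ, ℝ)) (t : ℝ) : Hsp :=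
  continuousToHsp (curryUnitInterval P t)

variable {P Pt Px Pxx : C(ℝ × ℝ, ℝ)}

theorem ae_slice_apply (P : C(ℝ × ℝ, ℝ)) (t : ℝ) : ∀ᵐ x ∂μ01, slice P t x = P (t, x) := by
  filter_upwards [ae_continuousToHsp_apply (curryUnitInterval P t),
    ae_μ01_iff.2 (Eventually.of_forall fun x hx => hx)] with x hx h01
  rw [slice, hx, projIcc_of_mem zero_le_one (Ioo_subset_Icc_self h01)]
  rfl

theorem curryUnitInterval_isPrimitiveOn {a b : ℝ}
    (hP : ∀ t x, HasDerivAt (fun t => P (t, x)) (Pt (t, x)) t) :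
    IsPrimitiveOn (curryUnitInterval P) (curryUnitInterval Pt) a b := by
  have hint : ∀ c d, IntervalIntegrable (curryUnitInterval Pt) volume c d := fun c d =>
    (map_continuous _).intervalIntegrable c d
  refine ⟨hint a b, fun t _ => ContinuousMap.ext fun x => ?_⟩
  have heval := ContinuousLinearMap.intervalIntegral_comp_comm
    (ContinuousMap.evalCLM ℝ x : C(unitInterval, ℝ) →L[ℝ] ℝ) (hint a t)
  have hftc := intervalIntegral.integral_eq_sub_of_hasDerivAt (fun s _ => hP s x)
    (Continuous.intervalIntegrable (by fun_prop) a t)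
  exact (sub_eq_iff_eq_add'.1 (hftc.symm.trans heval))

theorem slice_isPrimitiveOn {a b : ℝ}
    (hP : ∀ t x, HasDerivAt (fun t => P (t, x)) (Pt (t, x)) t) :
    IsPrimitiveOn (slice P) (slice Pt) a b :=
  (curryUnitInterval_isPrimitiveOn hP).clm_comp continuousToHsp

theorem slice_isH2Representative {t : ℝ}
    (hP : ∀ x, HasDerivAt (fun x => P (t, x)) (Px (t, x)) x)
    (hPx : ∀ x, HasDerivAt (fun x => Px (t, x)) (Pxx (t, x)) x) (h0 : P (t, 0) = 0)
    (h1 : P (t, 1) = 0) :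
    IsH2Representative (slice P t) (slice Pxx t) (fun x => P (t, x)) (fun x => Px (t, x)) where
  primitive := .of_hasDerivAt zero_le_one (by fun_prop) (by fun_prop) fun x _ => hP x
  primitive_deriv := (IsPrimitiveOn.of_hasDerivAt zero_le_one (by fun_prop)
    (u' := fun x => Pxx (t, x)) (by fun_prop) fun x _ => hPx x).congr_ae zero_le_one <| by
      filter_upwards [ae_μ01_iff.1 (ae_slice_apply Pxx t)] with x hx h01 using (hx h01).symm
  zero := h0
  one := h1
  ae_eq := (ae_slice_apply P t).mono fun x hx => hx.symm

end Slice

section Comparison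

variable {b ω : ℝ → ℝ} {τ s T : ℝ} {u r u' uxx : ℝ → Hsp} {P Pt Px Pxx : C(ℝ × ℝ, ℝ)}

/-- `P` is a classical subsolution of the heat equation on `(s,T) × (0,1)` with Dirichlet boundary
conditions; `Pt`, `Px` and `Pxx` are its partial derivatives. -/
structure IsHeatSubsolution (P Pt Px Pxx : C(ℝ × ℝ, ℝ)) (s T : ℝ) : Prop where
  hasDerivAt_time : ∀ t x, HasDerivAt (fun t => P (t, x)) (Pt (t, x)) t
  hasDerivAt_space : ∀ t x, HasDerivAt (fun x => P (t, x)) (Px (t, x)) x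
  hasDerivAt_space_space : ∀ t x, HasDerivAt (fun x => Px (t, x)) (Pxx (t, x)) x
  zero : ∀ t ∈ Ioo s T, P (t, 0) = 0
  one : ∀ t ∈ Ioo s T, P (t, 1) = 0
  le_laplacian : ∀ z, Pt z ≤ Pxx z

theorem IsStrongSolutionWith.slice_le (h : IsStrongSolutionWith b ω τ u r u' uxx)
    (hb : ∀ t, 0 ≤ b t) (hω : ∀ t, 0 ≤ ω t) (hu : NonnegOn u τ)
    (hP : IsHeatSubsolution P Pt Px Pxx s T) (hs : τ < s) (hsT : s < T)
    (hini : slice P s ≤ u s) : slice P T ≤ u T := by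
  have hprim : IsPrimitiveOn (slice P - u) (slice Pt - u') s T :=
    (slice_isPrimitiveOn hP.hasDerivAt_time).sub (h.fund s T hs hsT)
  refine sub_nonpos.1 <| nonpos_of_ae_deriv_le_laplacian hsT.le hprim ?_ (sub_nonpos.2 hini)
  filter_upwards [(ae_restrict_iff' measurableSet_Ioi).1 h.dom,
    (ae_restrict_iff' measurableSet_Ioi).1 h.eq, h.ae_selection_nonneg hb hω hu]
    with t hdom heq hr ht
  have hτ : t ∈ Ioi τ := hs.trans ht.1
  obtain ⟨f, g, hrep⟩ := (hdom hτ).exists_isH2Representative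
  refine ⟨slice Pxx t - uxx t, _, _, (slice_isH2Representative (hP.hasDerivAt_space t)
    (hP.hasDerivAt_space_space t) (hP.zero t ht) (hP.one t ht)).sub hrep, ?_⟩
  have hle : slice Pt t ≤ slice Pxx t := by
    rw [← Lp.coeFn_le]
    filter_upwards [ae_slice_apply Pt t, ae_slice_apply Pxx t] with x hPt hPxx
    rw [hPt, hPxx]
    exact hP.le_laplacian (t, x)
  rw [Pi.sub_apply, heq hτ]
  exact sub_le_sub hle (le_add_of_nonneg_left (hr hτ))

end Comparison

section Bump

theorem hasDerivAt_max_zero_pow (n : ℕ) (z : ℝ) :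
    HasDerivAt (fun z : ℝ => max z 0 ^ (n + 2)) ((n + 2 : ℕ) * max z 0 ^ (n + 1)) z := by
  rcases lt_trichotomy z 0 with hz | rfl | hz
  · rw [max_eq_right hz.le, zero_pow n.succ_ne_zero, mul_zero]
    refine (hasDerivAt_const z (0 : ℝ)).congr_of_eventuallyEq ?_
    filter_upwards [Iio_mem_nhds hz] with y hy
    rw [max_eq_right (mem_Iio.1 hy).le, zero_pow (by lia)]
  · have hlo : (fun z : ℝ => max z 0 ^ (n + 2)) =o[𝓝 0] fun z : ℝ => z := by
      refine Asymptotics.IsBigO.trans_isLittleO (.of_bound 1 (Eventually.of_forall fun z => ?_))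
        (Asymptotics.isLittleO_pow_id (𝕜 := ℝ) (n := n + 2) (by lia))
      rw [one_mul, norm_pow, norm_pow, Real.norm_eq_abs, Real.norm_eq_abs,
        abs_of_nonneg (le_max_right z 0)]
      exact pow_le_pow_left₀ (le_max_right z 0) (max_le (le_abs_self z) (abs_nonneg z)) _
    simpa [hasDerivAt_iff_isLittleO] using hlo
  · rw [max_eq_left hz.le]
    refine (hasDerivAt_pow (n + 2) z).congr_of_eventuallyEq ?_
    filter_upwards [Ioi_mem_nhds hz] with y hy
    rw [max_eq_left (mem_Ioi.1 hy).le]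

/-- The `C²` bump `(e² - y²)₊³`, the profile of the travelling subsolutions of the heat equation. -/
def bump (e : ℝ) : C(ℝ, ℝ) := ⟨fun y => max (e ^ 2 - y ^ 2) 0 ^ 3, by fun_prop⟩

/-- The first derivative of `bump e`. -/
def bumpDeriv (e : ℝ) : C(ℝ, ℝ) := ⟨fun y => -6 * y * max (e ^ 2 - y ^ 2) 0 ^ 2, by fun_prop⟩

/-- The second derivative of `bump e`. -/
def bumpDerivTwo (e : ℝ) : C(ℝ, ℝ) :=
  ⟨fun y => 24 * y ^ 2 * max (e ^ 2 - y ^ 2) 0 - 6 * max (e ^ 2 - y ^ 2) 0 ^ 2, by fun_prop⟩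

variable {e y : ℝ}

theorem bump_of_le_abs (he : 0 ≤ e) (hy : e ≤ |y|) : bump e y = 0 := by
  have hle : e ^ 2 - y ^ 2 ≤ 0 := by
    rw [sub_nonpos, ← sq_abs y]
    gcongr
  simp [bump, max_eq_right hle]

theorem bump_pos (hy : |y| < e) : 0 < bump e y := by
  have hlt : y ^ 2 < e ^ 2 := by
    rw [← sq_abs y]
    gcongr
  exact pow_pos (lt_max_of_lt_left (sub_pos.2 hlt)) 3

theorem bump_le (e y : ℝ) : bump e y ≤ e ^ 6 := by
  have hle : max (e ^ 2 - y ^ 2) 0 ≤ e ^ 2 :=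
    max_le (sub_le_self _ (sq_nonneg y)) (sq_nonneg e)
  calc bump e y ≤ (e ^ 2) ^ 3 := pow_le_pow_left₀ (le_max_right _ _) hle 3
    _ = e ^ 6 := by ring

theorem hasDerivAt_bump (e y : ℝ) : HasDerivAt (bump e) (bumpDeriv e y) y := by
  have hinner : HasDerivAt (fun y => e ^ 2 - y ^ 2) (-(2 * y)) y := by
    simpa using (hasDerivAt_pow 2 y).const_sub (e ^ 2)
  refine ((hasDerivAt_max_zero_pow 1 _).comp y hinner).congr_deriv ?_
  simp only [bumpDeriv, ContinuousMap.coe_mk]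
  push_cast
  ring

theorem hasDerivAt_bumpDeriv (e y : ℝ) : HasDerivAt (bumpDeriv e) (bumpDerivTwo e y) y := by
  have hinner : HasDerivAt (fun y => e ^ 2 - y ^ 2) (-(2 * y)) y := by
    simpa using (hasDerivAt_pow 2 y).const_sub (e ^ 2)
  refine (((hasDerivAt_id y).const_mul (-6)).fun_mul
    ((hasDerivAt_max_zero_pow 0 _).comp y hinner)).congr_deriv ?_
  simp only [bumpDerivTwo, ContinuousMap.coe_mk, Function.comp_apply, id]
  push_cast
  ring

theorem exists_neg_mul_bump_sub_le_bumpDerivTwo (he : 0 < e) (v : ℝ) :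
    ∃ K, ∀ y, -(K * bump e y) - v * bumpDeriv e y ≤ bumpDerivTwo e y := by
  set L := 6 * (|v| * e) + 30
  refine ⟨L ^ 2 / (96 * e ^ 2), fun y => ?_⟩
  simp only [bump, bumpDeriv, bumpDerivTwo, ContinuousMap.coe_mk]
  rcases le_or_gt (e ^ 2 - y ^ 2) 0 with hA | hA
  · simp [max_eq_right hA]
  rw [max_eq_left hA.le]
  set A := e ^ 2 - y ^ 2
  have hdrift : 6 * (v * y) + 30 ≤ L := by
    have hy : |y| ≤ e := abs_le_of_sq_le_sq (by linarith) he.le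
    have hvy : v * y ≤ |v| * e := (le_abs_self _).trans ((abs_mul v y).trans_le (by gcongr))
    linarith
  -- `K` is chosen so that this quadratic in `A` has a double root.
  have hquad : 0 ≤ L ^ 2 / (96 * e ^ 2) * A ^ 2 - L * A + 24 * e ^ 2 := by
    have hsq : L ^ 2 / (96 * e ^ 2) * A ^ 2 - L * A + 24 * e ^ 2
        = (L * A - 48 * e ^ 2) ^ 2 / (96 * e ^ 2) := by
      field_simp
      ring
    rw [hsq]
    positivity
  have hy : y ^ 2 = e ^ 2 - A := by ring
  rw [hy]
  nlinarith [mul_nonneg hA.le hquad, mul_le_mul_of_nonneg_left hdrift (sq_nonneg A)]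

end Bump

section TravellingWave

variable {K v s T x₀ x₁ e c : ℝ} {φ φ' φ'' : C(ℝ, ℝ)}

/-- The profile `φ`, centred at `x₀` at time `s`, moving with velocity `v` and decaying at rate
`K`. -/
def travellingWave (K v s x₀ : ℝ) (φ : C(ℝ, ℝ)) : C(ℝ × ℝ, ℝ) :=
  ⟨fun z => Real.exp (-(K * (z.1 - s))) * φ (z.2 - (x₀ + v * (z.1 - s))), by fun_prop⟩

theorem travellingWave_apply (t x : ℝ) : travellingWave K v s x₀ φ (t, x) =
    Real.exp (-(K * (t - s))) * φ (x - (x₀ + v * (t - s))) :=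
  rfl

theorem travellingWave_initial (x : ℝ) : travellingWave K v s x₀ φ (s, x) = φ (x - x₀) := by
  simp [travellingWave_apply]

theorem hasDerivAt_travellingWave_time (hφ : ∀ y, HasDerivAt φ (φ' y) y) (t x : ℝ) :
    HasDerivAt (fun t => travellingWave K v s x₀ φ (t, x))
      (travellingWave K v s x₀ (-(K • φ) - v • φ') (t, x)) t := by
  have hshift : HasDerivAt (fun t => x - (x₀ + v * (t - s))) (-(v * 1)) t :=
    ((((hasDerivAt_id t).sub_const s).const_mul v).const_add x₀).const_sub x
  have hexp : HasDerivAt (fun t => Real.exp (-(K * (t - s))))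
      (Real.exp (-(K * (t - s))) * -(K * 1)) t :=
    (((hasDerivAt_id t).sub_const s).const_mul K).neg.exp
  refine (hexp.fun_mul ((hφ _).comp t hshift)).congr_deriv ?_
  simp only [travellingWave_apply, Function.comp_apply, ContinuousMap.sub_apply,
    ContinuousMap.neg_apply, ContinuousMap.smul_apply, smul_eq_mul]
  ring

theorem hasDerivAt_travellingWave_space (hφ : ∀ y, HasDerivAt φ (φ' y) y) (t x : ℝ) :
    HasDerivAt (fun x => travellingWave K v s x₀ φ (t, x))
      (travellingWave K v s x₀ φ' (t, x)) x := by
  simp only [travellingWave_apply]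
  exact ((hφ _).comp_sub_const x _).const_mul _

theorem isHeatSubsolution_travellingWave (hφ : ∀ y, HasDerivAt φ (φ' y) y)
    (hφ' : ∀ y, HasDerivAt φ' (φ'' y) y) (hle : ∀ y, -(K * φ y) - v * φ' y ≤ φ'' y)
    (hsupp : ∀ y, e ≤ |y| → φ y = 0)
    (hpath : ∀ t ∈ Ioo s T, x₀ + v * (t - s) ∈ Icc e (1 - e)) :
    IsHeatSubsolution (travellingWave K v s x₀ φ) (travellingWave K v s x₀ (-(K • φ) - v • φ'))
      (travellingWave K v s x₀ φ') (travellingWave K v s x₀ φ'') s T where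
  hasDerivAt_time := hasDerivAt_travellingWave_time hφ
  hasDerivAt_space := hasDerivAt_travellingWave_space hφ
  hasDerivAt_space_space := hasDerivAt_travellingWave_space hφ'
  zero t ht := by
    rw [travellingWave_apply, hsupp _ (le_abs.2 (.inr (by linarith [(hpath t ht).1]))), mul_zero]
  one t ht := by
    rw [travellingWave_apply, hsupp _ (le_abs.2 (.inl (by linarith [(hpath t ht).2]))), mul_zero]
  le_laplacian z := mul_le_mul_of_nonneg_left (hle _) (Real.exp_pos _).le

theorem exists_isHeatSubsolution (he : 0 < e) (hc : 0 < c) (hsT : s < T)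
    (hx₀ : x₀ ∈ Icc e (1 - e)) (hx₁ : x₁ ∈ Icc e (1 - e)) :
    ∃ P Pt Px Pxx, IsHeatSubsolution P Pt Px Pxx s T ∧ (∀ x, P (s, x) ≤ c) ∧
      (∀ x, e ≤ |x - x₀| → P (s, x) = 0) ∧ ∀ x, |x - x₁| < e → 0 < P (T, x) := by
  have hTs : 0 < T - s := sub_pos.2 hsT
  obtain ⟨v, hv⟩ : ∃ v, x₀ + v * (T - s) = x₁ := ⟨(x₁ - x₀) / (T - s), by field_simp; ring⟩
  obtain ⟨K, hK⟩ := exists_neg_mul_bump_sub_le_bumpDerivTwo he v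
  have hpath : ∀ t ∈ Ioo s T, x₀ + v * (t - s) ∈ Icc e (1 - e) := fun t ht => by
    have hmem := (convex_Icc e (1 - e)).add_smul_sub_mem hx₀ hx₁
      ⟨div_nonneg (sub_nonneg.2 ht.1.le) hTs.le,
        (div_le_one hTs).2 (sub_le_sub_right ht.2.le s)⟩
    rwa [← hv, add_sub_cancel_left, smul_eq_mul, mul_comm v, ← mul_assoc,
      div_mul_cancel₀ _ hTs.ne', mul_comm _ v] at hmem
  set a := c / e ^ 6
  have ha : 0 < a := by positivity
  have hsupp : ∀ y, e ≤ |y| → (a • bump e) y = 0 := fun y hy => by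
    rw [ContinuousMap.smul_apply, bump_of_le_abs he.le hy, smul_zero]
  refine ⟨_, _, _, _, isHeatSubsolution_travellingWave (K := K) (φ := a • bump e)
    (φ' := a • bumpDeriv e) (φ'' := a • bumpDerivTwo e)
    (fun y => (hasDerivAt_bump e y).const_smul a)
    (fun y => (hasDerivAt_bumpDeriv e y).const_smul a) (fun y => ?_) hsupp hpath,
    fun x => ?_, fun x hx => ?_, fun x hx => ?_⟩
  · simp only [ContinuousMap.smul_apply, smul_eq_mul]
    linarith [mul_le_mul_of_nonneg_left (hK y) ha.le]
  · rw [travellingWave_initial, ContinuousMap.smul_apply, smul_eq_mul, div_mul_eq_mul_div,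
      div_le_iff₀ (by positivity)]
    exact mul_le_mul_of_nonneg_left (bump_le e _) hc.le
  · rw [travellingWave_initial, hsupp _ hx]
  · rw [travellingWave_apply, hv]
    exact mul_pos (Real.exp_pos _) (mul_pos ha (bump_pos hx))

end TravellingWave

section StrongMaximumPrinciple

variable {b ω : ℝ → ℝ} {τ s T : ℝ} {u r u' uxx : ℝ → Hsp}

theorem IsStrongSolutionWith.ae_pos_near {x₀ x₁ e c : ℝ}
    (h : IsStrongSolutionWith b ω τ u r u' uxx) (hb : ∀ t, 0 ≤ b t) (hω : ∀ t, 0 ≤ ω t)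
    (hu : NonnegOn u τ) (hs : τ < s) (hsT : s < T) (he : 0 < e) (hc : 0 < c)
    (hx₀ : x₀ ∈ Icc e (1 - e)) (hx₁ : x₁ ∈ Icc e (1 - e))
    (hini : ∀ᵐ x ∂μ01, |x - x₀| < e → c ≤ u s x) :
    ∀ᵐ x ∂μ01, |x - x₁| < e → 0 < u T x := by
  obtain ⟨P, Pt, Px, Pxx, hP, hPle, hPzero, hPpos⟩ := exists_isHeatSubsolution he hc hsT hx₀ hx₁
  have hle : slice P s ≤ u s := by
    rw [← Lp.coeFn_le]
    filter_upwards [ae_slice_apply P s, hini, hu s hs.le] with x hx hcx h0x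
    rw [hx]
    rcases lt_or_ge |x - x₀| e with hxe | hxe
    · exact (hPle x).trans (hcx hxe)
    · exact (hPzero x hxe).trans_le h0x
  filter_upwards [ae_slice_apply P T,
    (Lp.coeFn_le _ _).2 (h.slice_le hb hω hu hP hs hsT hle)] with x hx hxle hxe
  exact (hPpos x hxe).trans_le (hx ▸ hxle)

theorem ae_μ01_of_forall_exists_ball {p : ℝ → Prop}
    (h : ∀ x₁ ∈ Ioo (0 : ℝ) 1, ∃ e > 0, ∀ᵐ x ∂μ01, |x - x₁| < e → p x) : ∀ᵐ x ∂μ01, p x := by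
  rw [ae_μ01_iff]
  suffices hnull : volume {x : ℝ | x ∈ Ioo (0 : ℝ) 1 ∧ ¬ p x} = 0 by
    simpa only [ae_iff, Classical.not_imp] using hnull
  refine measure_null_of_locally_null _ fun x₁ hx₁ => ?_
  obtain ⟨e, he, hae⟩ := h x₁ hx₁.1
  refine ⟨_, inter_mem_nhdsWithin _ (Metric.ball_mem_nhds x₁ he), measure_mono_null ?_
    (ae_iff.1 (ae_μ01_iff.1 hae))⟩
  exact fun x hx hp => hx.1.2 (hp hx.1.1 hx.2)

theorem IsH2Representative.exists_ae_ge {v w : Hsp} {f g : ℝ → ℝ}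
    (h : IsH2Representative v w f g) (hv : 0 ≤ v) (hne : v ≠ 0) :
    ∃ x₀ ∈ Ioo (0 : ℝ) 1, ∃ c > 0, ∃ δ > 0, ∀ᵐ x ∂μ01, |x - x₀| < δ → c ≤ v x := by
  obtain ⟨x₀, hx₀, hpos⟩ : ∃ x₀ ∈ Ioo (0 : ℝ) 1, 0 < f x₀ := by
    by_contra! hcon
    refine hne (le_antisymm ?_ hv)
    rw [← Lp.coeFn_le]
    filter_upwards [h.ae_eq, Lp.coeFn_zero ℝ 2 μ01, ae_μ01_iff.2 (.of_forall fun x hx => hx)]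
      with x hx h0 h01
    rw [← hx, h0]
    exact hcon x h01
  have hcont : ContinuousAt f x₀ :=
    (h.primitive.continuousOn zero_le_one).continuousAt (Icc_mem_nhds hx₀.1 hx₀.2)
  obtain ⟨δ, hδ, hball⟩ := Metric.eventually_nhds_iff_ball.1
    (hcont.eventually_const_lt (half_lt_self hpos))
  refine ⟨x₀, hx₀, f x₀ / 2, half_pos hpos, δ, hδ, ?_⟩
  filter_upwards [h.ae_eq] with x hx hxδ
  exact hx ▸ (hball x hxδ).le

theorem IsStrongSolutionWith.exists_ne_zero_inDomainA
    (h : IsStrongSolutionWith b ω τ u r u' uxx) (hs : τ < s) (hsT : s < T) (hne : u s ≠ 0) :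
    ∃ s' ∈ Ioo s T, u s' ≠ 0 ∧ InDomainA (u s') (uxx s') := by
  have hnear : ∀ᶠ t in 𝓝[>] s, t < T ∧ u t ≠ 0 := by
    filter_upwards [Ioo_mem_nhdsGT hsT, nhdsWithin_le_nhds
      ((h.cont.continuousAt (Ici_mem_nhds hs)).eventually_ne hne)] with t ht hut using ⟨ht.2, hut⟩
  obtain ⟨q, hsq, hq⟩ := mem_nhdsGT_iff_exists_Ioo_subset.1 hnear
  obtain ⟨t, hdom, ht⟩ := (Measure.dense_of_ae ((ae_restrict_iff' measurableSet_Ioi).1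
    h.dom)).exists_mem_open isOpen_Ioo (nonempty_Ioo.2 hsq)
  exact ⟨t, ⟨ht.1, (hq ht).1⟩, (hq ht).2, hdom (hs.trans ht.1)⟩

theorem IsStrongSolutionWith.ae_pos (h : IsStrongSolutionWith b ω τ u r u' uxx)
    (hb : ∀ t, 0 ≤ b t) (hω : ∀ t, 0 ≤ ω t) (hu : NonnegOn u τ) (hs : τ < s) (hsT : s < T)
    (hne : u s ≠ 0) : ∀ᵐ x ∂μ01, 0 < u T x := by
  obtain ⟨s', ⟨hss', hs'T⟩, hne', hdom⟩ := h.exists_ne_zero_inDomainA hs hsT hne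
  obtain ⟨f, g, hrep⟩ := hdom.exists_isH2Representative
  obtain ⟨x₀, hx₀, c, hc, δ, hδ, hini⟩ := hrep.exists_ae_ge (hu.nonneg (hs.trans hss').le) hne'
  refine ae_μ01_of_forall_exists_ball fun x₁ hx₁ => ?_
  have hmargin : ∀ x ∈ Ioo (0 : ℝ) 1, ∀ᶠ e in 𝓝[>] 0, x ∈ Icc e (1 - e) := fun x hx => by
    filter_upwards [Ioo_mem_nhdsGT hx.1, Ioo_mem_nhdsGT (sub_pos.2 hx.2)] with e he he'
    exact ⟨he.2.le, by linarith [he'.2]⟩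
  have hsmall : ∀ᶠ e in 𝓝[>] (0 : ℝ), e ∈ Ioo 0 δ := Ioo_mem_nhdsGT hδ
  obtain ⟨e, ⟨he, heδ⟩, hex₀, hex₁⟩ :=
    (hsmall.and ((hmargin x₀ hx₀).and (hmargin x₁ hx₁))).exists
  refine ⟨e, he, h.ae_pos_near hb hω hu (hs.trans hss') hs'T he hc hex₀ hex₁ ?_⟩
  filter_upwards [hini] with x hx hxe using hx (hxe.trans heδ)

end StrongMaximumPrinciple

theorem exists_eq_Iic_of_isLowerSet {α : Type*} [ConditionallyCompleteLinearOrder α]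
    [TopologicalSpace α] [OrderTopology α] {S : Set α} (hlower : IsLowerSet S)
    (hclosed : IsClosed S) (hne : S.Nonempty) (huniv : S ≠ univ) : ∃ a, S = Iic a := by
  obtain ⟨c, hc⟩ := (ne_univ_iff_exists_notMem S).1 huniv
  have hbdd : BddAbove S := ⟨c, fun t ht => le_of_not_ge fun hct => hc (hlower hct ht)⟩
  exact ⟨sSup S, Subset.antisymm (fun t ht => le_csSup hbdd ht)
    fun t ht => hlower ht (hclosed.csSup_mem hne hbdd)⟩

section CompleteTrajectory

theorem IsPositive.ae_pos {v : Hsp} (h : IsPositive v) : ∀ᵐ x ∂μ01, 0 < v x := by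
  obtain ⟨f, -, hf, hpos⟩ := h
  filter_upwards [hf, ae_μ01_iff.2 (.of_forall fun x hx => hx)] with x hx h01
  exact hx ▸ hpos x h01

theorem ne_zero_of_ae_pos {v : Hsp} (h : ∀ᵐ x ∂μ01, 0 < v x) : v ≠ 0 := by
  rintro rfl
  have hprob : IsProbabilityMeasure μ01 := ⟨by simp [μ01]⟩
  obtain ⟨x, hpos, hzero⟩ := (h.and (Lp.coeFn_zero ℝ 2 μ01)).exists
  exact hpos.ne' hzero

variable {b ω : ℝ → ℝ} {ω1 s t τ : ℝ} {ξ γ : ℝ → Hsp}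

namespace IsCompleteTrajectory

theorem continuous (h : IsCompleteTrajectory b ω γ) : Continuous γ :=
  continuous_iff_continuousAt.2 fun t =>
    let ⟨_, _, _, hsol⟩ := h (t - 1)
    hsol.cont.continuousAt (Ici_mem_nhds (sub_one_lt t))

theorem ae_pos (h : IsCompleteTrajectory b ω γ) (hb : ∀ t, 0 ≤ b t) (hω : ∀ t, 0 ≤ ω t)
    (hnn : ∀ t, ∀ᵐ x ∂μ01, 0 ≤ γ t x) (hst : s < t) (hne : γ s ≠ 0) : ∀ᵐ x ∂μ01, 0 < γ t x :=
  let ⟨_, _, _, hsol⟩ := h (s - 1)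
  hsol.ae_pos hb hω (fun t _ => hnn t) (sub_one_lt s) hst hne

theorem isLinearSolution (h : IsCompleteTrajectory b ω γ) (hb : ∀ t, 0 ≤ b t)
    (hω : ∀ t, 0 ≤ ω t) (hnn : ∀ t, ∀ᵐ x ∂μ01, 0 ≤ γ t x) (hne : ∀ t, τ < t → γ t ≠ 0) :
    IsLinearSolution b ω τ γ :=
  (h τ).isLinearSolution fun _ ht =>
    let ⟨s, hτs, hst⟩ := exists_between ht
    h.ae_pos hb hω hnn hst (hne s hτs)

theorem exists_eq_zero_iff_le (h : IsCompleteTrajectory b ω γ) (hb : ∀ t, 0 ≤ b t)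
    (hω : ∀ t, 0 ≤ ω t) (hnn : ∀ t, ∀ᵐ x ∂μ01, 0 ≤ γ t x) (hzero : ∃ t, γ t = 0)
    (hne : ¬ ∀ t, γ t = 0) : ∃ τ, ∀ t, γ t = 0 ↔ t ≤ τ := by
  have hlower : IsLowerSet {t | γ t = 0} := fun t s hst ht => by
    rcases hst.eq_or_lt with rfl | hlt
    · exact ht
    · by_contra hs
      exact ne_zero_of_ae_pos (h.ae_pos hb hω hnn hlt hs) ht
  obtain ⟨τ, hτ⟩ := exists_eq_Iic_of_isLowerSet hlower
    (isClosed_eq h.continuous continuous_const) hzero fun huniv => hne (eq_univ_iff_forall.1 huniv)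
  exact ⟨τ, fun t => Set.ext_iff.1 hτ t⟩

end IsCompleteTrajectory

end CompleteTrajectory

theorem statement14_general {b ω : ℝ → ℝ} {ω1 : ℝ} (hb : ∀ t, 0 ≤ b t) (hω : ∀ t, 0 ≤ ω t)
    (hωle : ∀ t, ω t ≤ ω1) (hω1 : ω1 < Real.pi ^ 2) {ξ γ : ℝ → Hsp}
    (hξtraj : IsCompleteTrajectory b ω ξ) (hξbdd : BddTraj ξ)
    (hξpos : ∀ t, ∀ᵐ x ∂μ01, 0 < ξ t x) (htraj : IsCompleteTrajectory b ω γ) (hbdd : BddTraj γ)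
    (hnn : ∀ t, ∀ᵐ x ∂μ01, 0 ≤ γ t x) (hne0 : ¬ ∀ t, γ t = 0) (hneξ : ¬ ∀ t, γ t = ξ t) :
    ∃ τ : ℝ, (∀ t ≤ τ, γ t = 0) ∧
      IsLinearSolution b ω τ γ ∧
      (∀ w : ℝ → Hsp, IsLinearSolution b ω τ w → w τ = 0 → ∀ t, τ ≤ t → w t = γ t) ∧
      Tendsto γ atBot (𝓝 0) ∧ Tendsto (fun t => ‖γ t - ξ t‖) atTop (𝓝 0) := by
  have hξlin : ∀ τ, IsLinearSolution b ω τ ξ := fun τ =>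
    (hξtraj τ).isLinearSolution fun t _ => hξpos t
  have hzero : ∃ t, γ t = 0 := by
    by_contra! hne
    exact hneξ <| IsLinearSolution.eq_of_bddTraj hωle hω1
      (fun τ => htraj.isLinearSolution hb hω hnn fun t _ => hne t) hξlin hbdd hξbdd
  obtain ⟨τ, hτ⟩ := htraj.exists_eq_zero_iff_le hb hω hnn hzero hne0
  have hγlin : IsLinearSolution b ω τ γ :=
    htraj.isLinearSolution hb hω hnn fun t ht => mt (hτ t).1 ht.not_ge
  refine ⟨τ, fun t => (hτ t).2, hγlin, fun w hw hwτ t ht => ?_, ?_,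
    IsLinearSolution.tendsto_norm_sub hωle hω1 hγlin (hξlin τ)⟩
  · exact IsLinearSolution.eq_of_eq_initial hωle hw hγlin (hwτ.trans ((hτ τ).2 le_rfl).symm) ht
  · exact tendsto_const_nhds.congr' <| by
      filter_upwards [Iic_mem_atBot τ] with t ht using ((hτ t).2 ht).symm

/-- under (Cond1) and `ω₁ < π²`, every bounded complete
trajectory of the non-negative solutions distinct from `0` and `ξ_M` vanishes up
to some time `τ` and afterwards coincides with the unique solution of the linear
problem `∂u/∂t − ∂²u/∂x² = b(t) + ω(t)u` with zero datum at `τ`; moreover it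
converges to `0` as `t → −∞` and to `ξ_M` as `t → +∞`. -/
theorem statement14
    (b ω : ℝ → ℝ) (b0 b1 ω0 ω1 : ℝ) (hC : Cond1 b ω b0 b1 ω0 ω1)
    (hω1 : ω1 < Real.pi ^ 2)
    (ξ : ℝ → Hsp)
    (hξtraj : IsCompleteTrajectory b ω ξ) (hξbdd : BddTraj ξ)
    (hξpos : ∀ t : ℝ, IsPositive (ξ t))
    (hξuniq : ∀ γ : ℝ → Hsp, IsCompleteTrajectory b ω γ → BddTraj γ →
      (∀ t : ℝ, IsPositive (γ t)) → ∀ t : ℝ, γ t = ξ t)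
    (γ : ℝ → Hsp)
    (htraj : IsCompleteTrajectory b ω γ) (hbdd : BddTraj γ)
    (hnn : ∀ t : ℝ, ∀ᵐ x ∂μ01, 0 ≤ γ t x)
    (hne0 : ¬ ∀ t : ℝ, γ t = 0)
    (hneξ : ¬ ∀ t : ℝ, γ t = ξ t) :
    ∃ τ : ℝ, (∀ t ≤ τ, γ t = 0) ∧
      IsLinearSolution b ω τ γ ∧
      (∀ w : ℝ → Hsp, IsLinearSolution b ω τ w → w τ = 0 →
        ∀ t, τ ≤ t → w t = γ t) ∧
      Filter.Tendsto γ Filter.atBot (nhds 0) ∧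
      Filter.Tendsto (fun t => ‖γ t - ξ t‖) Filter.atTop (nhds 0) :=
  statement14_general (fun t => hC.b0pos.le.trans (hC.blb t))
    (fun t => hC.ω0nonneg.trans (hC.ωlb t)) hC.ωub hω1 hξtraj hξbdd (fun t => (hξpos t).ae_pos)
    htraj hbdd hnn hne0 hneξ

end
end

section
/- Let H be a (separable) Hilbert space of the form H = L²(0,1). Suppose h_n → h weakly in L¹(t₁,t₂;H), and suppose that for a.a. (t,x) ∈ (t₁,t₂)×(0,1) there exists N(t,x) such that h_n(t,x) ∈ C(t,x) for all n ≥ N(t,x), where C(t,x) ⊂ ℝ is a closed convex set. Then h(t,x) ∈ C(t,x) for a.a. (t,x). -/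
open MeasureTheory Set

noncomputable section

/-!
By Mazur's theorem, convex combinations of each tail `hₙ, hₙ₊₁, …` converge to `h` strongly in
`L¹(t₁,t₂;H)`, hence a.e. in `t` along a subsequence. So for a.e. `t` the value `h(t)` lies in the
closed convex hull of every tail of `hₙ(t)` in `H`. Passing to an a.e. convergent subsequence once
more, now in `x`, puts `h(t,x)` in the closed convex hull of every tail of `hₙ(t,x)`; some tail lies
in the closed convex set `C(t,x)`, and then so does its hull.

Mazur's theorem requires every functional on `L¹(μ;E)` to be given by a function in `L^∞(μ;E)`.
For a finite measure `μ` such a functional restricts to `L²(μ;E)`, where the Fréchet–Riesz theorem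
represents it by some `g`; testing against `g` restricted to measurable sets shows that `g` is
bounded.
-/

open Filter Topology ENNReal ContinuousLinearMap

section Mazur

variable {ι E : Type*} {l : Filter ι}
  [AddCommGroup E] [Module ℝ E] [TopologicalSpace E] [IsTopologicalAddGroup E]
  [ContinuousSMul ℝ E] [LocallyConvexSpace ℝ E]

lemma mem_of_frequently_mem_of_forall_dual_tendsto {K : Set E} {F : ι → E} {x : E}
    (hconvex : Convex ℝ K) (hclosed : IsClosed K) (hF : ∃ᶠ i in l, F i ∈ K)
    (hweak : ∀ φ : StrongDual ℝ E, Tendsto (fun i ↦ φ (F i)) l (𝓝 (φ x))) : x ∈ K := by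
  by_contra hx
  obtain ⟨φ, u, hφx, hφK⟩ := geometric_hahn_banach_point_closed hconvex hclosed hx
  obtain ⟨i, hiK, hiu⟩ := (hF.and_eventually ((hweak φ).eventually_lt_const hφx)).exists
  exact (hφK _ hiK).not_gt hiu

end Mazur

section ConvexHull

variable {ι α E : Type*} {mα : MeasurableSpace α} {μ : Measure α} {p : ℝ≥0∞}
  [NormedAddCommGroup E] [NormedSpace ℝ E] {F : ι → Lp E p μ} {s : Set ι} {f : Lp E p μ}

lemma ae_mem_convexHull_image (hf : f ∈ convexHull ℝ (F '' s)) :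
    ∀ᵐ x ∂μ, f x ∈ convexHull ℝ ((F · x) '' s) := by
  refine convexHull_min (t := {u : Lp E p μ | ∀ᵐ x ∂μ, u x ∈ convexHull ℝ ((F · x) '' s)})
    ?_ ?_ hf
  · rintro _ ⟨i, hi, rfl⟩
    rw [mem_ofPred_eq]
    filter_upwards with x using subset_convexHull ℝ _ (mem_image_of_mem _ hi)
  · intro u hu v hv a b ha hb hab
    filter_upwards [hu, hv, Lp.coeFn_add (a • u) (b • v), Lp.coeFn_smul a u,
      Lp.coeFn_smul b v] with x hux hvx hadd hau hbv
    rw [hadd, Pi.add_apply, hau, hbv]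
    exact convex_convexHull ℝ _ hux hvx ha hb hab

lemma ae_mem_closedConvexHull_image [Fact (1 ≤ p)] (hf : f ∈ closedConvexHull ℝ (F '' s)) :
    ∀ᵐ x ∂μ, f x ∈ closedConvexHull ℝ ((F · x) '' s) := by
  rw [closedConvexHull_eq_closure_convexHull] at hf
  obtain ⟨u, hu, hlim⟩ := mem_closure_iff_seq_limit.1 hf
  obtain ⟨k, -, hk⟩ := (tendstoInMeasure_of_tendsto_Lp hlim).exists_seq_tendsto_ae
  filter_upwards [hk, ae_all_iff.2 fun n ↦ ae_mem_convexHull_image (hu n)] with x hx hux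
  rw [closedConvexHull_eq_closure_convexHull]
  exact mem_closure_of_tendsto hx (.of_forall fun n ↦ hux (k n))

end ConvexHull

section Duality

variable {α E : Type*} {mα : MeasurableSpace α} {μ : Measure α} [NormedAddCommGroup E]

lemma dense_setOf_memLp {p q : ℝ≥0∞} [Fact (1 ≤ p)] (hp : p ≠ ∞) :
    Dense {f : Lp E p μ | MemLp f q μ} := by
  refine (Lp.simpleFunc.dense hp).mono fun f hf ↦ ?_
  let u : Lp.simpleFunc E p μ := ⟨f, hf⟩
  have hu : (Lp.simpleFunc.toSimpleFunc u).FinMeasSupp μ :=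
    (SimpleFunc.memLp_iff_finMeasSupp (zero_lt_one.trans_le Fact.out).ne' hp).1
      (Lp.simpleFunc.memLp u)
  exact (SimpleFunc.memLp_of_finite_measure_preimage q (SimpleFunc.finMeasSupp_iff.1 hu)).ae_eq
    (Lp.simpleFunc.toSimpleFunc_eq_toFun u)

variable [InnerProductSpace ℝ E]

lemma integral_inner_indicator {s : Set α} (hs : MeasurableSet s) (f g : α → E) :
    ∫ x, inner ℝ (f x) (s.indicator g x) ∂μ = ∫ x in s, inner ℝ (f x) (g x) ∂μ := by
  rw [← integral_indicator hs]
  congr with x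
  by_cases hx : x ∈ s <;> simp [hx]

lemma lpPairing_innerSL_eq_integral (f : Lp E 1 μ) (g : Lp E ∞ μ) :
    (innerSL ℝ).lpPairing μ 1 ∞ f g = ∫ x, inner ℝ (f x) (g x) ∂μ :=
  lpPairing_eq_integral _ _ _

variable [IsFiniteMeasure μ]

lemma exists_memLp_two_forall_apply_toLp_eq_integral_inner [CompleteSpace E]
    (φ : StrongDual ℝ (Lp E 1 μ)) :
    ∃ g : α → E, MemLp g 2 μ ∧ ∀ (f : α → E) (hf : MemLp f 2 μ),
      φ ((hf.mono_exponent one_le_two).toLp f) = ∫ x, inner ℝ (f x) (g x) ∂μ := by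
  let incl : Lp E 2 μ →L[ℝ] Lp E 1 μ := (lsmul ℝ ℝ).holderL μ 2 2 1 (Lp.const 2 μ 1)
  have incl_toLp (f : α → E) (hf : MemLp f 2 μ) :
      incl (hf.toLp f) = (hf.mono_exponent one_le_two).toLp f := by
    refine Lp.ext (((lsmul ℝ ℝ).coeFn_holder _ _).trans ?_)
    filter_upwards [Lp.coeFn_const 2 μ (1 : ℝ), hf.coeFn_toLp,
      (hf.mono_exponent one_le_two).coeFn_toLp] with x hone hf₂ hf₁
    rw [hone, Function.const_apply, hf₂, hf₁, lsmul_apply, one_smul]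
  let g : Lp E 2 μ := (InnerProductSpace.toDual ℝ _).symm (φ ∘L incl)
  refine ⟨g, Lp.memLp g, fun f hf ↦ ?_⟩
  calc φ ((hf.mono_exponent one_le_two).toLp f)
      = (φ ∘L incl) (hf.toLp f) := by rw [comp_apply, incl_toLp]
    _ = inner ℝ (hf.toLp f) g := by
        rw [real_inner_comm, InnerProductSpace.toDual_symm_apply]
    _ = ∫ x, inner ℝ (f x) (g x) ∂μ := by
        rw [L2.inner_def]
        exact integral_congr_ae (hf.coeFn_toLp.mono fun x hx ↦ by simp only [hx])

lemma ae_norm_le_of_forall_apply_toLp_eq_integral_inner {φ : StrongDual ℝ (Lp E 1 μ)} {g : α → E}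
    (hg : MemLp g 2 μ)
    (hφ : ∀ (f : α → E) (hf : MemLp f 2 μ),
      φ ((hf.mono_exponent one_le_two).toLp f) = ∫ x, inner ℝ (f x) (g x) ∂μ) :
    ∀ᵐ x ∂μ, ‖g x‖ ≤ ‖φ‖ := by
  have hsq : ∀ᵐ x ∂μ, ‖g x‖ ^ 2 ≤ ‖φ‖ * ‖g x‖ := by
    refine ae_le_of_forall_setIntegral_le (hg.integrable_norm_pow two_ne_zero)
      ((hg.integrable one_le_two).norm.const_mul _) fun s hs _ ↦ ?_
    have hgs : MemLp (s.indicator g) 2 μ := hg.indicator hs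
    calc ∫ x in s, ‖g x‖ ^ 2 ∂μ
        = ∫ x, inner ℝ (s.indicator g x) (g x) ∂μ := by
          simp only [real_inner_comm (g _), integral_inner_indicator hs,
            real_inner_self_eq_norm_sq]
      _ = φ ((hgs.mono_exponent one_le_two).toLp _) := (hφ _ hgs).symm
      _ ≤ ‖φ‖ * ‖(hgs.mono_exponent one_le_two).toLp _‖ :=
          (le_abs_self _).trans (φ.le_opNorm _)
      _ = ∫ x in s, ‖φ‖ * ‖g x‖ ∂μ := by
          rw [L1.norm_eq_integral_norm, integral_const_mul, ← integral_indicator hs]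
          congr 1
          refine integral_congr_ae ?_
          filter_upwards [(hgs.mono_exponent one_le_two).coeFn_toLp] with x hx
          rw [hx, norm_indicator_eq_indicator_norm]
  filter_upwards [hsq] with x hx
  nlinarith [norm_nonneg (g x), norm_nonneg φ]

theorem exists_eq_flip_lpPairing_innerSL [CompleteSpace E] (φ : StrongDual ℝ (Lp E 1 μ)) :
    ∃ g : Lp E ∞ μ, φ = ((innerSL ℝ).lpPairing μ 1 ∞).flip g := by
  obtain ⟨g, hg₂, hφ⟩ := exists_memLp_two_forall_apply_toLp_eq_integral_inner φ
  have hg : MemLp g ∞ μ := memLp_top_of_bound hg₂.1 ‖φ‖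
    (ae_norm_le_of_forall_apply_toLp_eq_integral_inner hg₂ hφ)
  refine ⟨hg.toLp g, DFunLike.coe_injective <| Continuous.ext_on (dense_setOf_memLp one_ne_top)
    φ.continuous (map_continuous _) fun f (hf : MemLp f 2 μ) ↦ ?_⟩
  calc φ f = φ ((hf.mono_exponent one_le_two).toLp f) := by rw [Lp.toLp_coeFn]
    _ = ∫ x, inner ℝ (f x) (g x) ∂μ := hφ f hf
    _ = ∫ x, inner ℝ (f x) (hg.toLp g x) ∂μ :=
        integral_congr_ae (hg.coeFn_toLp.mono fun x hx ↦ by simp only [hx])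
    _ = ((innerSL ℝ).lpPairing μ 1 ∞).flip (hg.toLp g) f := by
        rw [flip_apply, lpPairing_innerSL_eq_integral]

end Duality

/-- Weak convergence in `L¹(μ; E)` along a filter, for functions with values in a Hilbert space.
The dual is encoded as `L^∞(μ; E)` acting through the inner product; integrability of the `F i` and
of `f` is not part of the definition, and without it the integrals below may be junk values. -/
def WeaklyTendstoL1 {ι α E : Type*} [MeasurableSpace α] [NormedAddCommGroup E]
    [InnerProductSpace ℝ E] (μ : Measure α) (F : ι → α → E) (l : Filter ι) (f : α → E) : Prop :=
  ∀ g : α → E, MemLp g ∞ μ →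
    Tendsto (fun i ↦ ∫ x, inner ℝ (F i x) (g x) ∂μ) l (𝓝 (∫ x, inner ℝ (f x) (g x) ∂μ))

namespace WeaklyTendstoL1

variable {ι α E : Type*} {mα : MeasurableSpace α} {μ : Measure α} {l : Filter ι}
  [NormedAddCommGroup E] [InnerProductSpace ℝ E] {F : ι → α → E} {f : α → E}

lemma restrict (h : WeaklyTendstoL1 μ F l f) {s : Set α} (hs : MeasurableSet s) :
    WeaklyTendstoL1 (μ.restrict s) F l f := by
  intro g hg
  simpa only [integral_inner_indicator hs] using
    h (s.indicator g) ((memLp_indicator_iff_restrict hs).2 hg)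

variable [CompleteSpace E]

lemma tendsto_dual [IsFiniteMeasure μ] (h : WeaklyTendstoL1 μ F l f)
    (hF : ∀ i, MemLp (F i) 1 μ) (hf : MemLp f 1 μ) (φ : StrongDual ℝ (Lp E 1 μ)) :
    Tendsto (fun i ↦ φ ((hF i).toLp (F i))) l (𝓝 (φ (hf.toLp f))) := by
  obtain ⟨g, rfl⟩ := exists_eq_flip_lpPairing_innerSL φ
  have pairing_toLp (u : α → E) (hu : MemLp u 1 μ) :
      ((innerSL ℝ).lpPairing μ 1 ∞).flip g (hu.toLp u) = ∫ x, inner ℝ (u x) (g x) ∂μ := by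
    rw [flip_apply, lpPairing_innerSL_eq_integral]
    exact integral_congr_ae (hu.coeFn_toLp.mono fun x hx ↦ by simp only [hx])
  simpa only [pairing_toLp] using h g (Lp.memLp g)

lemma ae_mem_closedConvexHull_of_isFiniteMeasure [IsFiniteMeasure μ] (h : WeaklyTendstoL1 μ F l f)
    (hF : ∀ i, MemLp (F i) 1 μ) (hf : MemLp f 1 μ) {s : Set ι} (hs : ∃ᶠ i in l, i ∈ s)
    (hcount : s.Countable) :
    ∀ᵐ x ∂μ, f x ∈ closedConvexHull ℝ ((F · x) '' s) := by
  have hmem : hf.toLp f ∈ closedConvexHull ℝ ((fun i ↦ (hF i).toLp (F i)) '' s) :=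
    mem_of_frequently_mem_of_forall_dual_tendsto convex_closedConvexHull isClosed_closedConvexHull
      (hs.mono fun i hi ↦ subset_closedConvexHull (mem_image_of_mem _ hi)) (h.tendsto_dual hF hf)
  filter_upwards [ae_mem_closedConvexHull_image hmem, hf.coeFn_toLp,
    (ae_ball_iff hcount).2 fun i _ ↦ (hF i).coeFn_toLp] with x hx hfx hFx
  rwa [hfx, image_congr hFx] at hx

theorem ae_mem_closedConvexHull [SigmaFinite μ] (h : WeaklyTendstoL1 μ F l f)
    (hF : ∀ i, MemLp (F i) 1 μ) (hf : MemLp f 1 μ) {s : Set ι} (hs : ∃ᶠ i in l, i ∈ s)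
    (hcount : s.Countable) :
    ∀ᵐ x ∂μ, f x ∈ closedConvexHull ℝ ((F · x) '' s) := by
  rw [← Measure.restrict_univ (μ := μ), ← iUnion_spanningSets μ, ae_restrict_iUnion_iff]
  intro n
  have : IsFiniteMeasure (μ.restrict (spanningSets μ n)) :=
    ⟨by simpa using measure_spanningSets_lt_top μ n⟩
  exact (h.restrict (measurableSet_spanningSets μ n)).ae_mem_closedConvexHull_of_isFiniteMeasure
    (fun i ↦ (hF i).restrict _) (hf.restrict _) hs hcount

end WeaklyTendstoL1

theorem statement17_general {α β E : Type*} {mα : MeasurableSpace α} {mβ : MeasurableSpace β}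
    {μ : Measure α} [SigmaFinite μ] {ν : Measure β}
    [NormedAddCommGroup E] [InnerProductSpace ℝ E] [CompleteSpace E]
    {F : ℕ → α → Lp E 2 ν} {f : α → Lp E 2 ν}
    (hF : ∀ n, MemLp (F n) 1 μ) (hf : MemLp f 1 μ) (hweak : WeaklyTendstoL1 μ F atTop f)
    {C : α → β → Set E}
    (hclosed : ∀ t x, IsClosed (C t x)) (hconvex : ∀ t x, Convex ℝ (C t x))
    (hFC : ∀ᵐ t ∂μ, ∀ᵐ x ∂ν, ∃ N : ℕ, ∀ n ≥ N, F n t x ∈ C t x) :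
    ∀ᵐ t ∂μ, ∀ᵐ x ∂ν, f t x ∈ C t x := by
  have hull_time : ∀ᵐ t ∂μ, ∀ N : ℕ, f t ∈ closedConvexHull ℝ ((F · t) '' Ici N) :=
    ae_all_iff.2 fun N ↦ hweak.ae_mem_closedConvexHull hF hf (eventually_ge_atTop N).frequently
      (to_countable _)
  filter_upwards [hull_time, hFC] with t ht htC
  have hull_space : ∀ᵐ x ∂ν, ∀ N : ℕ, f t x ∈ closedConvexHull ℝ ((F · t x) '' Ici N) :=
    ae_all_iff.2 fun N ↦ ae_mem_closedConvexHull_image (ht N)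
  filter_upwards [hull_space, htC] with x hx ⟨N, hN⟩
  exact closedConvexHull_min (image_subset_iff.2 hN) (hconvex t x) (hclosed t x) (hx N)

/-- if `hₙ → h` weakly in `L¹(t₁,t₂;H)` and for a.a. `(t,x)` the
values `hₙ(t,x)` eventually belong to a closed convex set `C(t,x) ⊆ ℝ`, then
`h(t,x) ∈ C(t,x)` for a.a. `(t,x)`. -/
theorem statement17
    (t₁ t₂ : ℝ) (ht : t₁ < t₂)
    (hn : ℕ → ℝ → Hsp) (h : ℝ → Hsp)
    (hmemn : ∀ n, MemLp (hn n) 1 (volume.restrict (Ioo t₁ t₂)))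
    (hmem : MemLp h 1 (volume.restrict (Ioo t₁ t₂)))
    (hweak : ∀ g : ℝ → Hsp, MemLp g ⊤ (volume.restrict (Ioo t₁ t₂)) →
      Filter.Tendsto
        (fun n => ∫ t in Ioo t₁ t₂, (inner ℝ (hn n t) (g t) : ℝ))
        Filter.atTop
        (nhds (∫ t in Ioo t₁ t₂, (inner ℝ (h t) (g t) : ℝ))))
    (C : ℝ → ℝ → Set ℝ)
    (hCclosed : ∀ t x, IsClosed (C t x))
    (hCconvex : ∀ t x, Convex ℝ (C t x))
    (hmemC : ∀ᵐ t ∂(volume.restrict (Ioo t₁ t₂)), ∀ᵐ x ∂μ01,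
      ∃ N : ℕ, ∀ n ≥ N, hn n t x ∈ C t x) :
    ∀ᵐ t ∂(volume.restrict (Ioo t₁ t₂)), ∀ᵐ x ∂μ01, h t x ∈ C t x := by
  exact statement17_general hmemn hmem hweak hCclosed hCconvex hmemC

end
end
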